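/- arXiv:2106.13760 — 8 statements merged into one kernel-verified Lean document; each statement's English description precedes it below -/
import Mathlib

section
/- Let m ≥ 1, r ≥ 0, and let (Q_0,P_0), (Q_1,P_1), …, (Q_r,P_r) be r+1 pairs of m×m matrices of independent commuting indeterminates. For 0 ≤ k ≤ r define A_k := Σ_{i=0}^{r−k} Q_i P_{i+k}. Then with respect to the canonical Poisson bracket, for all 0 ≤ k,l ≤ r and all 1 ≤ a,b,c,d ≤ m: if k+l ≤ r then {(A_k)_{ab}, (A_l)_{cd}} = δ_{bc} (A_{k+l})_{ad} − δ_{ad} (A_{k+l})_{cb}, and if k+l > r then {(A_k)_{ab}, (A_l)_{cd}} = 0. That is, the matrices A_0,…,A_r realize the standard Lie–Poisson (Kirillov–Kostant–Souriau) bracket of the dual of the Takiff algebra gl_m ⊗ ℂ[z]/(z^{r+1}). -/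
/-!
The matrices `A_k = Σ_{i=0}^{r−k} Q_i P_{i+k}` realize the standard Lie–Poisson (KKS)
bracket of the dual of the Takiff algebra `gl_m ⊗ ℂ[z]/(z^{r+1})`.
-/

open MvPolynomial

noncomputable section

/-- Index type for the entries of `N` pairs of `m × m` matrices of indeterminates. -/
abbrev Idx (N m : ℕ) := Fin N × Bool × Fin m × Fin m

/-- The matrix `Q_α` of indeterminates. -/
def Qm (N m : ℕ) (α : Fin N) : Matrix (Fin m) (Fin m) (MvPolynomial (Idx N m) ℂ) :=
  Matrix.of fun i j => X (α, false, i, j)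

/-- The matrix `P_α` of indeterminates. -/
def Pm (N m : ℕ) (α : Fin N) : Matrix (Fin m) (Fin m) (MvPolynomial (Idx N m) ℂ) :=
  Matrix.of fun i j => X (α, true, i, j)

/-- The canonical Poisson bracket. -/
def pois {N m : ℕ} (f g : MvPolynomial (Idx N m) ℂ) : MvPolynomial (Idx N m) ℂ :=
  ∑ α : Fin N, ∑ i : Fin m, ∑ j : Fin m,
    (pderiv (α, true, i, j) f * pderiv (α, false, j, i) g
      - pderiv (α, true, i, j) g * pderiv (α, false, j, i) f)

/-- The Takiff parametrisation `A_k := Σ_{i=0}^{r−k} Q_i P_{i+k}` (given `r+1` pairs). -/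
def Amat (m r : ℕ) (k : ℕ) : Matrix (Fin m) (Fin m) (MvPolynomial (Idx (r+1) m) ℂ) :=
  ∑ i : Fin (r+1), ∑ j : Fin (r+1),
    if (j : ℕ) = (i : ℕ) + k then Qm (r+1) m i * Pm (r+1) m j else 0

end

theorem Amat_apply' (m r k : ℕ) (a b : Fin m) :
    Amat m r k a b = ∑ i : Fin (r+1), ∑ j : Fin (r+1),
      if (j : ℕ) = (i : ℕ) + k then
        ∑ s : Fin m, (X (i, false, a, s) * X (j, true, s, b) : MvPolynomial (Idx (r+1) m) ℂ)
      else 0 := by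
  unfold Amat
  rw [Matrix.sum_apply]
  refine Finset.sum_congr rfl fun i _ => ?_
  rw [Matrix.sum_apply]
  refine Finset.sum_congr rfl fun j _ => ?_
  split_ifs
  · simp [Matrix.mul_apply, Qm, Pm]
  · rfl

theorem pderivP_Amat (m r k : ℕ) (a b i j : Fin m) (α : Fin (r+1)) :
    pderiv (α, true, i, j) (Amat m r k a b) =
      if j = b then ∑ β : Fin (r+1), if (α : ℕ) = (β : ℕ) + k then
        (X (β, false, a, i) : MvPolynomial (Idx (r+1) m) ℂ) else 0 else 0 := by
  rw [Amat_apply']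
  have key : ∀ (β γ : Fin (r+1)), pderiv (α, true, i, j) (if (γ : ℕ) = (β : ℕ) + k then
        ∑ s : Fin m, (X (β, false, a, s) * X (γ, true, s, b) : MvPolynomial (Idx (r+1) m) ℂ)
      else 0) = if γ = α then (if j = b then (if (α : ℕ) = (β : ℕ) + k then
        (X (β, false, a, i) : MvPolynomial (Idx (r+1) m) ℂ) else 0) else 0) else 0 := by
    intro β γ
    have h : ∀ s : Fin m, pderiv (α, true, i, j)
        (X (β, false, a, s) * X (γ, true, s, b) : MvPolynomial (Idx (r+1) m) ℂ) =
        if s = i then (if γ = α ∧ j = b then X (β, false, a, i) else 0) else 0 := by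
      intro s
      rw [Derivation.leibniz, pderiv_X, pderiv_X]
      simp only [Pi.single_apply, Prod.mk.injEq, smul_eq_mul]
      by_cases h1 : s = i <;> by_cases h2 : γ = α <;> by_cases h3 : j = b <;>
        simp_all [eq_comm]
    by_cases h2 : γ = α
    · subst h2
      split_ifs <;> simp_all [map_sum]
    · split_ifs <;> simp_all [map_sum]
  simp only [map_sum, key]
  simp

theorem pderivQ_Amat (m r l : ℕ) (c d i j : Fin m) (α : Fin (r+1)) :
    pderiv (α, false, j, i) (Amat m r l c d) =
      if j = c then ∑ γ : Fin (r+1), if (γ : ℕ) = (α : ℕ) + l then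
        (X (γ, true, i, d) : MvPolynomial (Idx (r+1) m) ℂ) else 0 else 0 := by
  rw [Amat_apply']
  have key : ∀ (β γ : Fin (r+1)), pderiv (α, false, j, i) (if (γ : ℕ) = (β : ℕ) + l then
        ∑ s : Fin m, (X (β, false, c, s) * X (γ, true, s, d) : MvPolynomial (Idx (r+1) m) ℂ)
      else 0) = if β = α then (if j = c then (if (γ : ℕ) = (α : ℕ) + l then
        (X (γ, true, i, d) : MvPolynomial (Idx (r+1) m) ℂ) else 0) else 0) else 0 := by
    intro β γ
    have h : ∀ s : Fin m, pderiv (α, false, j, i)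
        (X (β, false, c, s) * X (γ, true, s, d) : MvPolynomial (Idx (r+1) m) ℂ) =
        if s = i then (if β = α ∧ j = c then X (γ, true, i, d) else 0) else 0 := by
      intro s
      rw [Derivation.leibniz, pderiv_X, pderiv_X]
      simp only [Pi.single_apply, Prod.mk.injEq, smul_eq_mul]
      by_cases h1 : s = i <;> by_cases h2 : β = α <;> by_cases h3 : j = c <;>
        simp_all [eq_comm]
    by_cases h2 : β = α
    · subst h2
      split_ifs <;> simp_all [map_sum]
    · split_ifs <;> simp_all [map_sum]
  simp only [map_sum, key]
  rw [Finset.sum_comm]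
  simp

theorem half_sum (m r k l : ℕ) (a b c d : Fin m) :
    ∑ α : Fin (r+1), ∑ i : Fin m, ∑ j : Fin m,
      pderiv (α, true, i, j) (Amat m r k a b) * pderiv (α, false, j, i) (Amat m r l c d) =
    if b = c then Amat m r (k + l) a d else 0 := by
  simp only [pderivP_Amat, pderivQ_Amat]
  by_cases hbc : b = c
  · subst hbc
    simp only [if_true, ite_mul, zero_mul, mul_ite, mul_zero, Finset.sum_ite_eq',
      Finset.mem_univ, Finset.sum_mul_sum]
    rw [Amat_apply']
    have e : ∀ x : Fin (r+1), (∑ i : Fin m, ∑ β : Fin (r+1), ∑ γ : Fin (r+1),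
        (if (γ : ℕ) = (x : ℕ) + l then (if (x : ℕ) = (β : ℕ) + k then
          (X (β, false, a, i) * X (γ, true, i, d) : MvPolynomial (Idx (r+1) m) ℂ) else 0) else 0)) =
        ∑ β : Fin (r+1), ∑ γ : Fin (r+1), if (γ : ℕ) = (x : ℕ) + l ∧ (x : ℕ) = (β : ℕ) + k then
          ∑ i : Fin m, (X (β, false, a, i) * X (γ, true, i, d) : MvPolynomial (Idx (r+1) m) ℂ)
          else 0 := by
      intro x
      rw [Finset.sum_comm]
      refine Finset.sum_congr rfl fun β _ => ?_
      rw [Finset.sum_comm]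
      refine Finset.sum_congr rfl fun γ _ => ?_
      by_cases h1 : (γ : ℕ) = (x : ℕ) + l <;> by_cases h2 : (x : ℕ) = (β : ℕ) + k <;>
        simp [h1, h2]
    trans ∑ x : Fin (r+1), ∑ β : Fin (r+1), ∑ γ : Fin (r+1),
        if (γ : ℕ) = (x : ℕ) + l ∧ (x : ℕ) = (β : ℕ) + k then
          ∑ i : Fin m, (X (β, false, a, i) * X (γ, true, i, d) : MvPolynomial (Idx (r+1) m) ℂ)
          else 0
    · refine Finset.sum_congr rfl fun x _ => ?_
      rw [← e x]
    rw [Finset.sum_comm]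
    refine Finset.sum_congr rfl fun β _ => ?_
    rw [Finset.sum_comm]
    refine Finset.sum_congr rfl fun γ _ => ?_
    split_ifs with h
    · have hb : (β : ℕ) + k < r + 1 := by have := γ.2; omega
      rw [Finset.sum_eq_single (⟨(β : ℕ) + k, hb⟩ : Fin (r+1))]
      · rw [if_pos]
        exact ⟨by simp; omega, rfl⟩
      · intro x _ hx
        rw [if_neg]
        rintro ⟨_, h2⟩
        exact hx (Fin.ext h2)
      · simp
    · refine Finset.sum_eq_zero fun x _ => ?_
      rw [if_neg]
      rintro ⟨h1, h2⟩
      omega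
  · rw [if_neg hbc]
    refine Finset.sum_eq_zero fun α _ => Finset.sum_eq_zero fun i _ =>
      Finset.sum_eq_zero fun j _ => ?_
    by_cases h : j = b
    · rw [if_neg (c := j = c) (by rintro rfl; exact hbc h.symm), mul_zero]
    · rw [if_neg h, zero_mul]

theorem pois_Amat (m r k l : ℕ) (a b c d : Fin m) :
    pois ((Amat m r k) a b) ((Amat m r l) c d) =
        (if b = c then (Amat m r (k + l)) a d else 0)
          - (if a = d then (Amat m r (k + l)) c b else 0) := by
  unfold pois
  simp only [Finset.sum_sub_distrib]
  rw [half_sum, half_sum, add_comm l k]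
  simp only [eq_comm (a := d)]

theorem Amat_zero (m r k : ℕ) (h : r < k) : Amat m r k = 0 := by
  unfold Amat
  refine Finset.sum_eq_zero fun i _ => Finset.sum_eq_zero fun j _ => ?_
  rw [if_neg]
  have := j.2
  omega

/-- the matrices `A_0, …, A_r` satisfy the graded Lie–Poisson bracket of the
dual Takiff algebra: `{(A_k)_{ab}, (A_l)_{cd}} = δ_{bc}(A_{k+l})_{ad} − δ_{ad}(A_{k+l})_{cb}`
for `k+l ≤ r`, and `0` for `k+l > r`. -/
theorem statement2 (m r : ℕ) (hm : 1 ≤ m) (k l : ℕ) (hk : k ≤ r) (hl : l ≤ r)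
    (a b c d : Fin m) :
    (k + l ≤ r →
      pois ((Amat m r k) a b) ((Amat m r l) c d) =
        (if b = c then (Amat m r (k + l)) a d else 0)
          - (if a = d then (Amat m r (k + l)) c b else 0)) ∧
    (r < k + l → pois ((Amat m r k) a b) ((Amat m r l) c d) = 0) := by
  refine ⟨fun _ => pois_Amat m r k l a b c d, fun h => ?_⟩
  rw [pois_Amat, Amat_zero m r (k + l) h]
  simp
end

section
/- Let m ≥ 2 and r ≥ 1. Let R := ℂ[z]/(z^{r+1}) and regard Mat_m(R) as a Lie algebra over ℂ with the commutator bracket; write z also for the image of the variable in R. Let T_{kj} ∈ ℂ for 0 ≤ k,j ≤ r, not all zero, and for 0 ≤ k ≤ r define the linear map B_k : Mat_m(ℂ) → Mat_m(R) by B_k(X) := Σ_{j=0}^{r} T_{kj}·(X z^j). Then the following are equivalent: (1) for all X, Y ∈ Mat_m(ℂ) and all 0 ≤ k,l ≤ r one has ⁅B_k(X), B_l(Y)⁆ = B_{k+l}(⁅X,Y⁆) whenever k+l ≤ r, and ⁅B_k(X), B_l(Y)⁆ = 0 whenever k+l > r; (2) setting t_j := T_{1j} for 1 ≤ j ≤ r,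 for every 0 ≤ k,j ≤ r the scalar T_{kj} equals the coefficient of ε^j in the polynomial (Σ_{l=1}^{r} t_l ε^l)^k ∈ ℂ[ε]. In particular T_{00} = 1, T_{0j} = 0 for j > 0, T_{k0} = 0 for k > 0, and T_{kj} = 0 for j < k. -/
/-!
Classification of the linear automorphisms of the Takiff algebra
`Mat_m(ℂ[z]/(z^{r+1}))` that preserve the graded bracket structure.
-/

noncomputable section

/-- The truncated polynomial ring `ℂ[z]/(z^{r+1})`. -/
abbrev TruncPoly (r : ℕ) : Type :=
  Polynomial ℂ ⧸ Ideal.span ({(Polynomial.X : Polynomial ℂ) ^ (r + 1)} : Set (Polynomial ℂ))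

/-- The image `z` of the variable in `ℂ[z]/(z^{r+1})`. -/
def zbar (r : ℕ) : TruncPoly r := Ideal.Quotient.mk _ Polynomial.X

/-- The map `B_k : Mat_m(ℂ) → Mat_m(ℂ[z]/(z^{r+1}))`, `B_k(X) = Σ_{j=0}^r T_{kj}·(X z^j)`. -/
def Bmap (m r : ℕ) (T : ℕ → ℕ → ℂ) (k : ℕ) (M : Matrix (Fin m) (Fin m) ℂ) :
    Matrix (Fin m) (Fin m) (TruncPoly r) :=
  ∑ j ∈ Finset.range (r + 1),
    (algebraMap ℂ (TruncPoly r) (T k j) * zbar r ^ j) • M.map (algebraMap ℂ (TruncPoly r))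

end

open Polynomial in
/-- The row polynomial. -/
noncomputable def rowPoly (r : ℕ) (T : ℕ → ℕ → ℂ) (k : ℕ) : Polynomial ℂ :=
  ∑ j ∈ Finset.range (r + 1), C (T k j) * X ^ j

/-- The quotient map. -/
noncomputable def qmk (r : ℕ) : Polynomial ℂ →+* TruncPoly r := Ideal.Quotient.mk _

theorem rowPoly_coeff (r : ℕ) (T : ℕ → ℕ → ℂ) (k j : ℕ) (hj : j ≤ r) :
    (rowPoly r T k).coeff j = T k j := by
  unfold rowPoly
  simp only [Polynomial.finsetSum_coeff, Polynomial.coeff_C_mul, Polynomial.coeff_X_pow]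
  rw [Finset.sum_eq_single j]
  · simp
  · intro b _ hb
    simp [Ne.symm hb]
  · intro h
    exact absurd (Finset.mem_range.2 (by omega)) h

theorem qmk_eq_iff (r : ℕ) (a b : Polynomial ℂ) :
    qmk r a = qmk r b ↔ ∀ j ≤ r, a.coeff j = b.coeff j := by
  unfold qmk
  rw [Ideal.Quotient.eq, Ideal.mem_span_singleton, Polynomial.X_pow_dvd_iff]
  simp only [Polynomial.coeff_sub, sub_eq_zero, Nat.lt_succ_iff]

theorem qmk_pow_zero (r : ℕ) (a : Polynomial ℂ) (h : a.coeff 0 = 0) (n : ℕ) (hn : r < n) :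
    qmk r a ^ n = 0 := by
  rw [← map_pow]
  unfold qmk
  rw [Ideal.Quotient.eq_zero_iff_mem, Ideal.mem_span_singleton]
  exact (pow_dvd_pow _ hn).trans (pow_dvd_pow_of_dvd (Polynomial.X_dvd_iff.2 h) n)

theorem qmk_idem (r : ℕ) (a : Polynomial ℂ) (h : qmk r a * qmk r a = qmk r a) :
    qmk r a = 0 ∨ qmk r a = 1 := by
  have key : ∀ b : Polynomial ℂ, b.coeff 0 = 0 → IsIdempotentElem (qmk r b) → qmk r b = 0 := by
    intro b hb hi
    rw [← hi.pow_succ_eq r]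
    exact qmk_pow_zero r b hb _ (by omega)
  have h0 : a.coeff 0 * a.coeff 0 = a.coeff 0 := by
    have := (qmk_eq_iff r (a * a) a).1 (by rw [map_mul, h]) 0 (Nat.zero_le _)
    rwa [Polynomial.mul_coeff_zero] at this
  by_cases hc : a.coeff 0 = 0
  · exact Or.inl (key a hc h)
  · right
    have h1 : a.coeff 0 = 1 := mul_left_cancel₀ hc (by rw [h0, mul_one])
    have := key (1 - a) (by simp [h1]) (by
      rw [map_sub, map_one]
      exact IsIdempotentElem.one_sub h)
    rw [map_sub, map_one] at this
    exact (sub_eq_zero.1 this).symm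

theorem Bmap_eq (m r : ℕ) (T : ℕ → ℕ → ℂ) (k : ℕ) (M : Matrix (Fin m) (Fin m) ℂ) :
    Bmap m r T k M = qmk r (rowPoly r T k) • M.map (algebraMap ℂ (TruncPoly r)) := by
  unfold Bmap rowPoly
  rw [map_sum, Finset.sum_smul]
  refine Finset.sum_congr rfl fun j _ => ?_
  rw [map_mul, map_pow]
  rfl

theorem map_lie_gen {R : Type*} [CommRing R] (f : ℂ →+* R) (m : ℕ)
    (X Y : Matrix (Fin m) (Fin m) ℂ) (a b : R) :
    ⁅a • X.map f, b • Y.map f⁆ = (a * b) • (⁅X, Y⁆ : Matrix (Fin m) (Fin m) ℂ).map f := by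
  rw [Ring.lie_def, Ring.lie_def, Matrix.map_sub _ (fun x y => map_sub _ x y), Matrix.map_mul,
    Matrix.map_mul, smul_mul_smul_comm, smul_mul_smul_comm, mul_comm b a, smul_sub]

theorem zero_smul_gen {R : Type*} [CommRing R] (m : ℕ) (X : Matrix (Fin m) (Fin m) R) :
    (0 : R) • X = 0 := zero_smul _ _

theorem zero_smul_trunc (m r : ℕ) (X : Matrix (Fin m) (Fin m) (TruncPoly r)) :
    (0 : TruncPoly r) • X = 0 := zero_smul_gen (R := TruncPoly r) m X

theorem map_lie' (m r : ℕ) (X Y : Matrix (Fin m) (Fin m) ℂ) (a b : TruncPoly r) :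
    ⁅a • X.map (algebraMap ℂ (TruncPoly r)), b • Y.map (algebraMap ℂ (TruncPoly r))⁆
      = (a * b) • (⁅X, Y⁆ : Matrix (Fin m) (Fin m) ℂ).map (algebraMap ℂ (TruncPoly r)) := by
  exact map_lie_gen (algebraMap ℂ (TruncPoly r)) m X Y a b

theorem smul_inj' (m r : ℕ) (hm : 2 ≤ m) (a b : TruncPoly r)
    (h : ∀ X Y : Matrix (Fin m) (Fin m) ℂ,
      a • (⁅X, Y⁆ : Matrix (Fin m) (Fin m) ℂ).map (algebraMap ℂ (TruncPoly r)) =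
      b • (⁅X, Y⁆ : Matrix (Fin m) (Fin m) ℂ).map (algebraMap ℂ (TruncPoly r))) : a = b := by
  let i : Fin m := ⟨0, by omega⟩
  let j : Fin m := ⟨1, by omega⟩
  have hij : j ≠ i := by simp [i, j]
  have h1 := congrFun (congrFun (h (Matrix.single i j 1) (Matrix.single j i 1)) i) i
  have h2 : (⁅Matrix.single i j (1 : ℂ), Matrix.single j i 1⁆ : Matrix (Fin m) (Fin m) ℂ) i i
      = 1 := by
    rw [Ring.lie_def]
    simp [hij]
  rw [Matrix.smul_apply, Matrix.smul_apply, Matrix.map_apply, h2, map_one, smul_eq_mul,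
    smul_eq_mul, mul_one, mul_one] at h1
  exact h1

theorem lie_iff (m r : ℕ) (hm : 2 ≤ m) (T : ℕ → ℕ → ℂ) :
    (∀ X Y : Matrix (Fin m) (Fin m) ℂ, ∀ k ≤ r, ∀ l ≤ r,
        (k + l ≤ r → ⁅Bmap m r T k X, Bmap m r T l Y⁆ = Bmap m r T (k + l) ⁅X, Y⁆) ∧
        (r < k + l → ⁅Bmap m r T k X, Bmap m r T l Y⁆ = 0)) ↔
    ∀ k ≤ r, ∀ l ≤ r,
      (k + l ≤ r → qmk r (rowPoly r T k) * qmk r (rowPoly r T l) = qmk r (rowPoly r T (k + l))) ∧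
      (r < k + l → qmk r (rowPoly r T k) * qmk r (rowPoly r T l) = 0) := by
  simp only [Bmap_eq, map_lie']
  constructor
  · intro h k hk l hl
    refine ⟨fun hkl => smul_inj' m r hm _ _ fun X Y => (h X Y k hk l hl).1 hkl,
      fun hkl => smul_inj' m r hm _ _ fun X Y => ?_⟩
    rw [(h X Y k hk l hl).2 hkl, zero_smul_trunc]
  · intro h X Y k hk l hl
    refine ⟨fun hkl => by rw [(h k hk l hl).1 hkl], fun hkl => by
      rw [(h k hk l hl).2 hkl, zero_smul_trunc]⟩

open Polynomial in
theorem icc_coeff (r : ℕ) (T : ℕ → ℕ → ℂ) :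
    rowPoly r T 1 = C (T 1 0) + ∑ l ∈ Finset.Icc 1 r, C (T 1 l) * X ^ l := by
  unfold rowPoly
  rw [Finset.sum_range_succ', add_comm, pow_zero, mul_one]
  congr 1
  rw [Finset.range_eq_Ico, Finset.sum_Ico_add' (fun j => C (T 1 j) * (X : ℂ[X]) ^ j) 0 r 1]
  rfl

open Polynomial in
theorem icc_coeff_zero (r : ℕ) (T : ℕ → ℕ → ℂ) :
    (∑ l ∈ Finset.Icc 1 r, C (T 1 l) * X ^ l).coeff 0 = 0 := by
  rw [Polynomial.finsetSum_coeff]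
  refine Finset.sum_eq_zero fun l hl => ?_
  have : 1 ≤ l := (Finset.mem_Icc.1 hl).1
  rw [Polynomial.coeff_C_mul, Polynomial.coeff_X_pow, if_neg (by omega), mul_zero]

/-- the linear substitution `B_k = Σ_j T_{kj} A_j` preserves the graded Takiff
bracket relations (⁅B_k(X), B_l(Y)⁆ = B_{k+l}(⁅X,Y⁆) for k+l ≤ r and = 0 for k+l > r, where
the bracket is the matrix commutator over `ℂ[z]/(z^{r+1})`) if and only if, setting
`t_j := T_{1j}`, each `T_{kj}` is the coefficient of `ε^j` in `(Σ_{l=1}^r t_l ε^l)^k`. -/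
theorem statement4 (m r : ℕ) (hm : 2 ≤ m) (hr : 1 ≤ r) (T : ℕ → ℕ → ℂ)
    (hT : ¬ ∀ k ≤ r, ∀ j ≤ r, T k j = 0) :
    (∀ X Y : Matrix (Fin m) (Fin m) ℂ, ∀ k ≤ r, ∀ l ≤ r,
        (k + l ≤ r → ⁅Bmap m r T k X, Bmap m r T l Y⁆ = Bmap m r T (k + l) ⁅X, Y⁆) ∧
        (r < k + l → ⁅Bmap m r T k X, Bmap m r T l Y⁆ = 0))
      ↔ (∀ k ≤ r, ∀ j ≤ r, T k j =
          ((∑ l ∈ Finset.Icc 1 r, Polynomial.C (T 1 l) * Polynomial.X ^ l) ^ k).coeff j) := by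
  rw [lie_iff m r hm T]
  have h2 : (∀ k ≤ r, ∀ j ≤ r, T k j =
          ((∑ l ∈ Finset.Icc 1 r, Polynomial.C (T 1 l) * Polynomial.X ^ l) ^ k).coeff j) ↔
      ∀ k ≤ r, qmk r (rowPoly r T k) =
        qmk r (∑ l ∈ Finset.Icc 1 r, Polynomial.C (T 1 l) * Polynomial.X ^ l) ^ k := by
    refine forall₂_congr fun k _ => ?_
    rw [← map_pow, qmk_eq_iff]
    refine forall₂_congr fun j hj => ?_
    rw [rowPoly_coeff r T k j hj]
  rw [h2]
  have hq0 := icc_coeff_zero r T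
  have hq1 := icc_coeff r T
  generalize (∑ l ∈ Finset.Icc 1 r, Polynomial.C (T 1 l) * Polynomial.X ^ l) = q at hq0 hq1 ⊢
  constructor
  · intro h
    have p0 : qmk r (rowPoly r T 0) = 1 := by
      refine (qmk_idem r _ ((h 0 (by omega) 0 (by omega)).1 (by omega))).resolve_left fun h0 => ?_
      refine hT fun k hk j hj => ?_
      have h1 := (h 0 (by omega) k hk).1 (by omega)
      rw [h0, zero_mul, zero_add, ← map_zero (qmk r), qmk_eq_iff] at h1
      rw [← rowPoly_coeff r T k j hj, ← h1 j hj, Polynomial.coeff_zero]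
    have pk : ∀ k ≤ r, qmk r (rowPoly r T k) = qmk r (rowPoly r T 1) ^ k := by
      intro k
      induction k with
      | zero => intro _; rw [p0, pow_zero]
      | succ k ih =>
        intro hk
        rw [pow_succ (qmk r (rowPoly r T 1)), ← ih (by omega)]
        exact ((h k (by omega) 1 hr).1 hk).symm
    have pz : qmk r (rowPoly r T 1 ^ (r + 1)) = qmk r 0 := by
      rw [map_pow, pow_succ (qmk r (rowPoly r T 1)), ← pk r le_rfl, map_zero]
      exact (h r le_rfl 1 hr).2 (by omega)
    have c0 := (qmk_eq_iff r _ _).1 pz 0 (by omega)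
    rw [Polynomial.coeff_zero, Polynomial.coeff_zero_eq_eval_zero, Polynomial.eval_pow,
      ← Polynomial.coeff_zero_eq_eval_zero, rowPoly_coeff r T 1 0 (by omega)] at c0
    have c1 : T 1 0 = 0 := pow_eq_zero_iff (by omega) |>.1 c0
    rw [c1, map_zero, zero_add] at hq1
    rw [← hq1]
    exact pk
  · intro h k hk l hl
    refine ⟨fun hkl => by rw [h k hk, h l hl, h _ hkl, pow_add (qmk r q)], fun hkl => ?_⟩
    rw [h k hk, h l hl, ← pow_add (qmk r q)]
    exact qmk_pow_zero r q hq0 _ hkl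
end

section
/- Let m ≥ 1, r ≥ 1, u ∈ ℂ, and t_1, …, t_r ∈ ℂ. Let W^{[j]} ∈ Mat_m(ℂ) for −r ≤ j ≤ 0 and A^{[k,0]} ∈ Mat_m(ℂ) for 0 ≤ k ≤ r−1 be fixed, and let C, A_0, …, A_{r−1} : ℂ∖{0} → Mat_m(ℂ) be functions such that, as ε → 0 (ε ≠ 0): C(ε) − Σ_{j=−r}^{0} W^{[j]} ε^j → 0, and A_k(ε) + Σ_{l=1}^{r−k} W^{[−k−l]} ε^{−l} − A^{[k,0]} → 0 for each 0 ≤ k ≤ r−1. Define v(ε) := u + Σ_{j=1}^{r} t_j ε^j, and B_i(ε) := Σ_{j=i}^{r−1} A_j(ε)·M^{(r−1)}_{i,j}(t_1,…,t_{r−1}) for 0 ≤ i ≤ r−1 (for r = 1 read B_0(ε) := A_0(ε)). Then for every λ ∈ ℂ with λ ≠ u, the limit as ε → 0 (ε ≠ 0) of Σ_{i=0}^{r−1} B_i(ε)/(λ−u)^{i+1} + C(ε)/(λ−v(ε)) exists and equals Σ_{i=0}^{r} B̃_i/(λ−u)^{i+1}, where B̃_i := Σ_{k=i}^{r} Ã_k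 · M^{(r)}_{i,k}(t_1,…,t_r), with Ã_k := W^{[−k]} + A^{[k,0]} for 0 ≤ k ≤ r−1 and Ã_r := W^{[−r]}. -/
/-!
The inductive confluence step (Theorem 4 / `sect4:small_theorem` of the paper): a simple
pole at `v(ε) = u + Σ t_j ε^j` collides with a pole of Poincaré rank `r−1` at `u`,
producing in the limit `ε → 0` a pole of Poincaré rank `r` at `u` whose coefficients carry
`t_1, …, t_r` through the polynomials `M^{(r)}_{i,k}`.

Here `W k` stands for the Laurent coefficient `W^{[−k]}` of `C(ε)` (`0 ≤ k ≤ r`) and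
`A0 k` stands for `A^{[k,0]}`.
-/

open Filter

noncomputable section

/-- `M^{(r)}_{i,k}(t)` is the coefficient of `ε^k` in `(Σ_{l=1}^r t_l ε^l)^i`
(with `M^{(0)}_{0,0} = 1`). -/
def Mco (r : ℕ) (t : ℕ → ℂ) (i k : ℕ) : ℂ :=
  ((∑ l ∈ Finset.Icc 1 r, Polynomial.C (t l) * Polynomial.X ^ l) ^ i).coeff k

end

open Polynomial in
/-- the polynomial `P_r(t, ε)` -/
noncomputable def Ppoly (r : ℕ) (t : ℕ → ℂ) : ℂ[X] :=
  ∑ l ∈ Finset.Icc 1 r, Polynomial.C (t l) * Polynomial.X ^ l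

lemma Mco_def' (r : ℕ) (t : ℕ → ℂ) (i k : ℕ) : Mco r t i k = ((Ppoly r t) ^ i).coeff k := rfl

lemma X_dvd_Ppoly (r : ℕ) (t : ℕ → ℂ) : (Polynomial.X) ∣ Ppoly r t := by
  unfold Ppoly
  apply Finset.dvd_sum
  intro l hl
  rw [Finset.mem_Icc] at hl
  exact Dvd.dvd.mul_left (dvd_pow_self _ (by omega)) _

lemma Mco_zero (r : ℕ) (t : ℕ → ℂ) (i k : ℕ) (h : k < i) : Mco r t i k = 0 := by
  rw [Mco_def']
  exact Polynomial.X_pow_dvd_iff.mp (pow_dvd_pow_of_dvd (X_dvd_Ppoly r t) i) k h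

lemma Mco_pred (r : ℕ) (hr : 1 ≤ r) (t : ℕ → ℂ) (i k : ℕ) (h : k < r) :
    Mco (r - 1) t i k = Mco r t i k := by
  obtain ⟨s, rfl⟩ : ∃ s, r = s + 1 := ⟨r - 1, by omega⟩
  simp only [Nat.add_sub_cancel]
  have h1 : Ppoly (s + 1) t - Ppoly s t = Polynomial.C (t (s+1)) * Polynomial.X ^ (s+1) := by
    unfold Ppoly
    rw [Finset.sum_Icc_succ_top (by omega)]
    ring
  have h2 : (Polynomial.X ^ (s+1)) ∣ (Ppoly (s + 1) t) ^ i - (Ppoly s t) ^ i := by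
    refine dvd_trans ?_ (sub_dvd_pow_sub_pow _ _ i)
    rw [h1]
    exact Dvd.intro_left _ rfl
  have h3 := Polynomial.X_pow_dvd_iff.mp h2 k h
  rw [Polynomial.coeff_sub, sub_eq_zero] at h3
  rw [Mco_def', Mco_def', h3]

/-- Taylor coefficients of `1 / (x - P(ε))` up to order `r` -/
noncomputable def cco (r : ℕ) (t : ℕ → ℂ) (x : ℂ) (k : ℕ) : ℂ :=
  ∑ i ∈ Finset.range (r + 1), (x ^ (i + 1))⁻¹ * Mco r t i k

lemma tendsto_eval (p : Polynomial ℂ) :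
    Tendsto (fun ε : ℂ => p.eval ε) (nhdsWithin 0 {(0 : ℂ)}ᶜ) (nhds (p.eval 0)) :=
  (p.continuous.tendsto 0).mono_left nhdsWithin_le_nhds

lemma geom_aux (x p : ℂ) (hx : x ≠ 0) (hxp : x - p ≠ 0) (r : ℕ) :
    (x - p)⁻¹ = ∑ i ∈ Finset.range (r + 1), (x ^ (i + 1))⁻¹ * p ^ i
      + p ^ (r + 1) * ((x ^ (r + 1))⁻¹ * (x - p)⁻¹) := by
  induction r with
  | zero => simp; field_simp; ring
  | succ n ih =>
    rw [Finset.sum_range_succ]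
    have h : p ^ (n + 1) * ((x ^ (n + 1))⁻¹ * (x - p)⁻¹) = (x ^ (n + 1 + 1))⁻¹ * p ^ (n + 1)
        + p ^ (n + 1 + 1) * ((x ^ (n + 1 + 1))⁻¹ * (x - p)⁻¹) := by
      field_simp
      ring
    rw [add_assoc, ← h]
    exact ih

lemma key (r : ℕ) (t : ℕ → ℂ) (x : ℂ) (hx : x ≠ 0) (k : ℕ) (hk : k ≤ r) :
    Tendsto (fun ε : ℂ => ((x - (Ppoly r t).eval ε)⁻¹
        - ∑ j ∈ Finset.range k, cco r t x j * ε ^ j) * (ε ^ k)⁻¹)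
      (nhdsWithin 0 {(0 : ℂ)}ᶜ) (nhds (cco r t x k)) := by
  obtain ⟨q, hq⟩ := X_dvd_Ppoly r t
  set Q : Polynomial ℂ := ∑ i ∈ Finset.range (r + 1),
    Polynomial.C ((x ^ (i + 1))⁻¹) * (Ppoly r t) ^ i with hQ
  have hQc : ∀ j, Q.coeff j = cco r t x j := by
    intro j
    simp [hQ, cco, Polynomial.finsetSum_coeff, Polynomial.coeff_C_mul, Mco_def']
  have hdvd : (Polynomial.X ^ (k+1)) ∣
      Q - ∑ j ∈ Finset.range (k+1), Polynomial.C (cco r t x j) * Polynomial.X ^ j := by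
    rw [Polynomial.X_pow_dvd_iff]
    intro d hd
    simp [Polynomial.finsetSum_coeff, hQc, Polynomial.coeff_X_pow]
    rw [if_pos (by omega), sub_self]
  obtain ⟨R, hR⟩ := hdvd
  have hP0 : (Ppoly r t).eval 0 = 0 := by rw [hq]; simp
  have hlim := tendsto_eval (Ppoly r t)
  rw [hP0] at hlim
  have hinv : Tendsto (fun ε : ℂ => (x - (Ppoly r t).eval ε)⁻¹)
      (nhdsWithin 0 {(0 : ℂ)}ᶜ) (nhds (x - 0)⁻¹) :=
    (hlim.const_sub x).inv₀ (by simpa using hx)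
  have hne : ∀ᶠ ε in nhdsWithin (0:ℂ) {(0 : ℂ)}ᶜ, x - (Ppoly r t).eval ε ≠ 0 :=
    (hlim.const_sub x).eventually_ne (by simpa using hx)
  have hid : Tendsto (fun ε : ℂ => ε) (nhdsWithin 0 {(0 : ℂ)}ᶜ) (nhds 0) :=
    tendsto_id.mono_left nhdsWithin_le_nhds
  have hmain : Tendsto (fun ε : ℂ => cco r t x k + ε * (R.eval ε + ε ^ (r - k) *
      (q.eval ε) ^ (r+1) * ((x ^ (r + 1))⁻¹ * (x - (Ppoly r t).eval ε)⁻¹)))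
      (nhdsWithin 0 {(0 : ℂ)}ᶜ) (nhds (cco r t x k + 0 * (R.eval 0 + 0 ^ (r - k) *
      (q.eval 0) ^ (r+1) * ((x ^ (r + 1))⁻¹ * (x - 0)⁻¹)))) :=
    tendsto_const_nhds.add (hid.mul ((tendsto_eval R).add
      (((hid.pow _).mul ((tendsto_eval q).pow _)).mul (tendsto_const_nhds.mul hinv))))
  rw [zero_mul, add_zero] at hmain
  refine hmain.congr' ?_
  filter_upwards [hne, self_mem_nhdsWithin] with ε h1 h2
  have h2 : ε ≠ 0 := h2
  have hgeo := geom_aux x _ hx h1 r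
  have hRe := congrArg (Polynomial.eval ε) hR
  have hqe := congrArg (Polynomial.eval ε) hq
  simp only [hQ, Polynomial.eval_sub, Polynomial.eval_finsetSum, Polynomial.eval_mul,
    Polynomial.eval_C, Polynomial.eval_pow, Polynomial.eval_X] at hRe hqe
  rw [Finset.sum_range_succ _ k] at hRe
  rw [eq_mul_inv_iff_mul_eq₀ (pow_ne_zero _ h2)]
  have e1 : ε ^ (r + 1) = ε ^ (r - k) * ε * ε ^ k := by
    rw [← pow_succ, ← pow_add]; congr 1; omega
  have e2 : (Ppoly r t).eval ε ^ (r + 1) = ε ^ (r - k) * ε * ε ^ k * q.eval ε ^ (r+1) := by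
    rw [hqe, mul_pow, e1]
  rw [e2] at hgeo
  generalize (x - (Ppoly r t).eval ε)⁻¹ = f at *
  linear_combination (-1 : ℂ) * hgeo - hRe

/-- assume `C(ε) − Σ_{k=0}^{r} ε^{−k} W^{[−k]} → 0` and, for `0 ≤ k ≤ r−1`,
`A_k(ε) + Σ_{l=1}^{r−k} ε^{−l} W^{[−k−l]} − A^{[k,0]} → 0` as `ε → 0` (ε ≠ 0).  Put
`v(ε) = u + Σ_{j=1}^{r} t_j ε^j` and `B_i(ε) = Σ_{j=i}^{r−1} M^{(r−1)}_{i,j}(t)·A_j(ε)`.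
Then for `λ ≠ u`,
`Σ_{i=0}^{r−1} B_i(ε)/(λ−u)^{i+1} + C(ε)/(λ−v(ε))` converges, as `ε → 0` (ε ≠ 0), to
`Σ_{i=0}^{r} B̃_i/(λ−u)^{i+1}` with `B̃_i = Σ_{k=i}^{r} M^{(r)}_{i,k}(t)·Ã_k`, where
`Ã_k = W^{[−k]} + A^{[k,0]}` for `k < r` and `Ã_r = W^{[−r]}`. -/
theorem statement9 (m r : ℕ) (hm : 1 ≤ m) (hr : 1 ≤ r) (u : ℂ) (t : ℕ → ℂ)
    (W A0 : ℕ → Matrix (Fin m) (Fin m) ℂ)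
    (C : ℂ → Matrix (Fin m) (Fin m) ℂ)
    (A : ℕ → ℂ → Matrix (Fin m) (Fin m) ℂ)
    (hC : Tendsto (fun ε : ℂ => C ε - ∑ k ∈ Finset.range (r + 1), (ε ^ k)⁻¹ • W k)
      (nhdsWithin 0 {(0 : ℂ)}ᶜ) (nhds 0))
    (hA : ∀ k ≤ r - 1, Tendsto
      (fun ε : ℂ => A k ε + (∑ l ∈ Finset.Icc 1 (r - k), (ε ^ l)⁻¹ • W (k + l)) - A0 k)
      (nhdsWithin 0 {(0 : ℂ)}ᶜ) (nhds 0)) :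
    ∀ lam : ℂ, lam ≠ u →
      Tendsto
        (fun ε : ℂ =>
          (∑ i ∈ Finset.range r, ((lam - u) ^ (i + 1))⁻¹ •
              ∑ j ∈ Finset.Icc i (r - 1), Mco (r - 1) t i j • A j ε)
            + (lam - (u + ∑ j ∈ Finset.Icc 1 r, t j * ε ^ j))⁻¹ • C ε)
        (nhdsWithin 0 {(0 : ℂ)}ᶜ)
        (nhds (∑ i ∈ Finset.range (r + 1), ((lam - u) ^ (i + 1))⁻¹ •
            ∑ k ∈ Finset.Icc i r, Mco r t i k • (if k < r then W k + A0 k else W r))) := by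
  intro lam hlam
  have hx : lam - u ≠ 0 := sub_ne_zero.mpr hlam
  set x := lam - u with hxdef
  set c := cco r t x with hc
  -- limits
  have hf := key r t x hx 0 (Nat.zero_le _)
  simp only [Finset.range_zero, Finset.sum_empty, sub_zero, pow_zero, inv_one, mul_one] at hf
  have hlim : Tendsto (fun ε : ℂ =>
      (∑ j ∈ Finset.range r, c j • (A j ε + (∑ l ∈ Finset.Icc 1 (r - j), (ε ^ l)⁻¹ • W (j + l))
          - A0 j))
      + (x - (Ppoly r t).eval ε)⁻¹ • (C ε - ∑ k ∈ Finset.range (r + 1), (ε ^ k)⁻¹ • W k)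
      + (∑ j ∈ Finset.range r, c j • A0 j)
      + ∑ k ∈ Finset.range (r + 1), (((x - (Ppoly r t).eval ε)⁻¹
        - ∑ j ∈ Finset.range k, c j * ε ^ j) * (ε ^ k)⁻¹) • W k)
      (nhdsWithin 0 {(0 : ℂ)}ᶜ)
      (nhds ((∑ j ∈ Finset.range r, c j • (0 : Matrix (Fin m) (Fin m) ℂ))
        + c 0 • (0 : Matrix (Fin m) (Fin m) ℂ) + (∑ j ∈ Finset.range r, c j • A0 j)
        + ∑ k ∈ Finset.range (r + 1), c k • W k)) := by
    refine ((Tendsto.add ?_ (hf.smul hC)).add tendsto_const_nhds).add ?_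
    · refine tendsto_finsetSum _ fun j hj => ?_
      rw [Finset.mem_range] at hj
      exact (hA j (by omega)).const_smul (c j)
    · refine tendsto_finsetSum _ fun k hk => ?_
      rw [Finset.mem_range] at hk
      exact (key r t x hx k (by omega)).smul_const (W k)
  -- the double sum over a triangle
  have htri : ∀ (n : ℕ) (F : ℕ → Matrix (Fin m) (Fin m) ℂ), n ≤ r + 1 →
      (∑ i ∈ Finset.range n, (x ^ (i + 1))⁻¹ • ∑ k ∈ Finset.Icc i (n - 1), Mco r t i k • F k)
        = ∑ k ∈ Finset.range n, c k • F k := by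
    intro n F hn
    have h1 : ∀ i ∈ Finset.range n,
        (x ^ (i + 1))⁻¹ • ∑ k ∈ Finset.Icc i (n - 1), Mco r t i k • F k
        = ∑ k ∈ Finset.range n, ((x ^ (i + 1))⁻¹ * Mco r t i k) • F k := by
      intro i hi
      rw [Finset.smul_sum]
      simp only [smul_smul]
      apply Finset.sum_subset
      · intro k hk
        simp only [Finset.mem_Icc, Finset.mem_range] at *
        omega
      · intro k hk hk2
        simp only [Finset.mem_Icc, Finset.mem_range] at *
        rw [Mco_zero r t i k (by omega)]
        simp
    rw [Finset.sum_congr rfl h1, Finset.sum_comm]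
    refine Finset.sum_congr rfl fun k hk => ?_
    rw [← Finset.sum_smul]
    congr 1
    rw [hc, cco]
    apply Finset.sum_subset
    · intro i hi
      simp only [Finset.mem_range] at *
      omega
    · intro i hi hi2
      simp only [Finset.mem_range] at *
      rw [Mco_zero r t i k (by omega)]
      simp
  have hend : (∑ i ∈ Finset.range (r + 1), (x ^ (i + 1))⁻¹ •
            ∑ k ∈ Finset.Icc i r, Mco r t i k • (if k < r then W k + A0 k else W r))
      = ((∑ j ∈ Finset.range r, c j • (0 : Matrix (Fin m) (Fin m) ℂ))
        + c 0 • (0 : Matrix (Fin m) (Fin m) ℂ) + (∑ j ∈ Finset.range r, c j • A0 j)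
        + ∑ k ∈ Finset.range (r + 1), c k • W k) := by
    have h := htri (r + 1) (fun k => if k < r then W k + A0 k else W r) le_rfl
    simp only [Nat.add_sub_cancel] at h
    rw [h, Finset.sum_range_succ, Finset.sum_range_succ]
    have h3 : ∀ k ∈ Finset.range r, c k • (if k < r then W k + A0 k else W r)
        = c k • A0 k + c k • W k := by
      intro k hk
      rw [Finset.mem_range] at hk
      rw [if_pos hk, smul_add, add_comm]
    rw [Finset.sum_congr rfl h3, Finset.sum_add_distrib]
    simp [add_assoc]
  rw [hend]
  refine hlim.congr' ?_
  filter_upwards [self_mem_nhdsWithin] with ε h2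
  have h2 : ε ≠ 0 := h2
  have hPe : lam - (u + ∑ j ∈ Finset.Icc 1 r, t j * ε ^ j) = x - (Ppoly r t).eval ε := by
    simp [Ppoly, Polynomial.eval_finsetSum, hxdef, sub_sub]
  have hB : (∑ i ∈ Finset.range r, (x ^ (i + 1))⁻¹ •
      ∑ j ∈ Finset.Icc i (r - 1), Mco (r - 1) t i j • A j ε)
      = ∑ j ∈ Finset.range r, c j • A j ε := by
    rw [← htri r (fun j => A j ε) (by omega)]
    refine Finset.sum_congr rfl fun i _ => ?_
    congr 1
    refine Finset.sum_congr rfl fun j hj => ?_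
    rw [Finset.mem_Icc] at hj
    rw [Mco_pred r hr t i j (by omega)]
  rw [hPe, hB]
  generalize (x - (Ppoly r t).eval ε)⁻¹ = f
  have hswap : (∑ j ∈ Finset.range r, c j • ∑ l ∈ Finset.Icc 1 (r - j), (ε ^ l)⁻¹ • W (j + l))
      = ∑ k ∈ Finset.range (r + 1), ((∑ j ∈ Finset.range k, c j * ε ^ j) * (ε ^ k)⁻¹) • W k := by
    simp only [Finset.smul_sum, smul_smul, Finset.sum_mul, Finset.sum_smul]
    rw [Finset.sum_sigma', Finset.sum_sigma']
    refine Finset.sum_bij' (fun p _ => ⟨p.1 + p.2, p.1⟩) (fun p _ => ⟨p.2, p.1 - p.2⟩)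
      ?_ ?_ ?_ ?_ ?_
    · rintro ⟨j, l⟩ h
      simp only [Finset.mem_sigma, Finset.mem_range, Finset.mem_Icc] at *
      omega
    · rintro ⟨k, j⟩ h
      simp only [Finset.mem_sigma, Finset.mem_range, Finset.mem_Icc] at *
      omega
    · rintro ⟨j, l⟩ h
      simp
    · rintro ⟨k, j⟩ h
      simp only [Finset.mem_sigma, Finset.mem_range] at h
      have : j + (k - j) = k := by omega
      simp [this]
    · rintro ⟨j, l⟩ h
      simp only
      congr 1
      rw [pow_add]
      field_simp
  simp only [sub_mul, sub_smul, Finset.sum_sub_distrib, smul_sub, smul_add,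
    Finset.sum_add_distrib]
  rw [hswap]
  simp only [Finset.smul_sum, smul_smul]
  abel
end

section
/- Let g and L be Lie algebras over ℂ. Let A_1 ∈ Hom_ℂ(g, L), and let (C_j)_{j ≥ −1} and (B_j)_{j ≥ −1} be families of ℂ-linear maps g → L, all but finitely many zero, with C_{−1} = A_1 and B_{−1} = −A_1. For ε ≠ 0 set C(ε) := Σ_{j ≥ −1} ε^j C_j and B(ε) := Σ_{j ≥ −1} ε^j B_j. Assume that for every ε ∈ ℂ∖{0} and all X, Y ∈ g: ⁅C(ε)(X), C(ε)(Y)⁆ = −C(ε)(⁅X,Y⁆), ⁅B(ε)(X), B(ε)(Y)⁆ = −B(ε)(⁅X,Y⁆), and ⁅C(ε)(X), B(ε)(Y)⁆ = 0. Set A_0 := C_0 + B_0. Then for all X, Y ∈ g: ⁅A_1(X), A_1(Y)⁆ = 0, ⁅A_1(X), A_0(Y)⁆ = −A_1(⁅X,Y⁆), and ⁅A_0(X), A_0(Y)⁆ = −A_0(⁅X,Y⁆). (Hence the 1+1 confluence of two simple poles turns two commuting copies of the Lie–Poisson relations of g into the Lie–Poisson relations of the degree-1 Takiff algebra of g.)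 -/
/-!
The 1+1 confluence at the level of Poisson (Lie–Poisson) relations: two commuting copies
of the Lie–Poisson relations of `g` produce, in the limit, the Lie–Poisson relations of
the degree-1 Takiff algebra of `g`.

A family `(C_j)_{j ≥ −1}` of linear maps `g → L`, all but finitely many zero, with
`C_{−1} = A₁`, is encoded by `A₁` together with the finitely supported family
`(Cm j)_{j ∈ ℕ}` of the nonnegative-index coefficients; its value at `ε ≠ 0` is
`serLaurent A₁ Cm ε = ε⁻¹ • A₁ + Σ_j ε^j • Cm j`.  The family `B` with `B_{−1} = −A₁`
is then `serLaurent (−A₁) Bm`.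
-/

noncomputable section

/-- `serLaurent A₁ Cm ε X = ε⁻¹ • A₁(X) + Σᶠ_{j∈ℕ} ε^j • (Cm j)(X)`. -/
def serLaurent {g L : Type*} [LieRing g] [LieAlgebra ℂ g] [LieRing L] [LieAlgebra ℂ L]
    (A₁ : g →ₗ[ℂ] L) (Cm : ℕ → (g →ₗ[ℂ] L)) (ε : ℂ) (X : g) : L :=
  ε⁻¹ • A₁ X + ∑ᶠ j : ℕ, ε ^ j • Cm j X

end

/-- Polynomial functions of a complex variable with values in a complex vector space. -/
inductive IsPolyFun {L : Type*} [AddCommGroup L] [Module ℂ L] : (ℂ → L) → Prop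
  | const (a : L) : IsPolyFun (fun _ => a)
  | add {f h : ℂ → L} : IsPolyFun f → IsPolyFun h → IsPolyFun (fun ε => f ε + h ε)
  | mulX {f : ℂ → L} : IsPolyFun f → IsPolyFun (fun ε => ε • f ε)

theorem IsPolyFun.exists_poly {L : Type*} [AddCommGroup L] [Module ℂ L] {f : ℂ → L}
    (hf : IsPolyFun f) (φ : Module.Dual ℂ L) :
    ∃ p : Polynomial ℂ, ∀ ε, φ (f ε) = p.eval ε := by
  induction hf with
  | const a => exact ⟨Polynomial.C (φ a), by simp⟩
  | add _ _ h1 h2 =>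
    obtain ⟨p, hp⟩ := h1
    obtain ⟨q, hq⟩ := h2
    exact ⟨p + q, by simp [hp, hq]⟩
  | mulX _ h1 =>
    obtain ⟨p, hp⟩ := h1
    exact ⟨Polynomial.X * p, by simp [hp]⟩

theorem IsPolyFun.eq_zero {L : Type*} [AddCommGroup L] [Module ℂ L] {f : ℂ → L}
    (hf : IsPolyFun f) (h0 : ∀ ε, ε ≠ 0 → f ε = 0) : f 0 = 0 := by
  rw [← Module.forall_dual_apply_eq_zero_iff ℂ]
  intro φ
  obtain ⟨p, hp⟩ := hf.exists_poly φ
  have hp0 : p = 0 := by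
    apply Polynomial.eq_zero_of_infinite_isRoot
    refine Set.Infinite.mono ?_ (Set.finite_singleton (0 : ℂ)).infinite_compl
    intro ε hε
    have : f ε = 0 := h0 ε (by simpa using hε)
    simp [Polynomial.IsRoot, ← hp, this]
  simp [hp, hp0]

theorem IsPolyFun.lie {L : Type*} [LieRing L] [LieAlgebra ℂ L] {f h : ℂ → L}
    (hf : IsPolyFun f) (hh : IsPolyFun h) : IsPolyFun (fun ε => ⁅f ε, h ε⁆) := by
  induction hf with
  | const a =>
    induction hh with
    | const b => exact .const _
    | add _ _ h1 h2 => simpa only [lie_add] using h1.add h2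
    | mulX _ h1 => simpa only [lie_smul] using h1.mulX
  | add _ _ h1 h2 => simpa only [add_lie] using h1.add h2
  | mulX _ h1 => simpa only [smul_lie] using h1.mulX

theorem IsPolyFun.pow_smul {L : Type*} [AddCommGroup L] [Module ℂ L] (a : L) (n : ℕ) :
    IsPolyFun (fun ε : ℂ => ε ^ n • a) := by
  induction n with
  | zero => simpa using IsPolyFun.const a
  | succ n ih => simpa only [pow_succ', mul_smul] using ih.mulX

theorem isPolyFun_finsum {g L : Type*} [AddCommGroup g] [Module ℂ g] [AddCommGroup L]
    [Module ℂ L] (Cm : ℕ → (g →ₗ[ℂ] L)) (hCm : (Function.support Cm).Finite) (X : g) :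
    IsPolyFun (fun ε : ℂ => ∑ᶠ j : ℕ, ε ^ j • Cm j X) := by
  have h : ∀ ε : ℂ, ∑ᶠ j : ℕ, ε ^ j • Cm j X = ∑ j ∈ hCm.toFinset, ε ^ j • Cm j X := by
    intro ε
    apply finsum_eq_sum_of_support_subset
    intro j hj
    simp only [Set.Finite.coe_toFinset, Function.mem_support] at hj ⊢
    rintro h
    simp [h] at hj
  simp only [h]
  induction hCm.toFinset using Finset.induction_on with
  | empty => simpa using IsPolyFun.const (0 : L)
  | insert a s ha ih =>
    simpa only [Finset.sum_insert ha] using (IsPolyFun.pow_smul (Cm a X) a).add ih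

theorem finsum_at_zero {g L : Type*} [AddCommGroup g] [Module ℂ g] [AddCommGroup L]
    [Module ℂ L] (Cm : ℕ → (g →ₗ[ℂ] L)) (X : g) :
    ∑ᶠ j : ℕ, (0 : ℂ) ^ j • Cm j X = Cm 0 X := by
  rw [finsum_eq_single _ 0]
  · simp
  · intro j hj
    simp [hj]

/-- if for every `ε ≠ 0` the maps `C(ε) = ε⁻¹A₁ + Σ ε^j C_j` and
`B(ε) = −ε⁻¹A₁ + Σ ε^j B_j` satisfy `⁅C(ε)X, C(ε)Y⁆ = −C(ε)⁅X,Y⁆`,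
`⁅B(ε)X, B(ε)Y⁆ = −B(ε)⁅X,Y⁆` and `⁅C(ε)X, B(ε)Y⁆ = 0`, then with `A₀ := C₀ + B₀` one has
`⁅A₁X, A₁Y⁆ = 0`, `⁅A₁X, A₀Y⁆ = −A₁⁅X,Y⁆` and `⁅A₀X, A₀Y⁆ = −A₀⁅X,Y⁆`:
the degree-1 Takiff Lie–Poisson relations. -/
theorem statement10 {g L : Type*} [LieRing g] [LieAlgebra ℂ g] [LieRing L] [LieAlgebra ℂ L]
    (A₁ : g →ₗ[ℂ] L) (Cm Bm : ℕ → (g →ₗ[ℂ] L))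
    (hCm : (Function.support Cm).Finite) (hBm : (Function.support Bm).Finite)
    (hC : ∀ ε : ℂ, ε ≠ 0 → ∀ X Y : g,
      ⁅serLaurent A₁ Cm ε X, serLaurent A₁ Cm ε Y⁆ = - serLaurent A₁ Cm ε ⁅X, Y⁆)
    (hB : ∀ ε : ℂ, ε ≠ 0 → ∀ X Y : g,
      ⁅serLaurent (-A₁) Bm ε X, serLaurent (-A₁) Bm ε Y⁆ = - serLaurent (-A₁) Bm ε ⁅X, Y⁆)
    (hCB : ∀ ε : ℂ, ε ≠ 0 → ∀ X Y : g,
      ⁅serLaurent A₁ Cm ε X, serLaurent (-A₁) Bm ε Y⁆ = 0) :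
    ∀ X Y : g,
      ⁅A₁ X, A₁ Y⁆ = 0 ∧
      ⁅A₁ X, (Cm 0 + Bm 0) Y⁆ = - A₁ ⁅X, Y⁆ ∧
      ⁅(Cm 0 + Bm 0) X, (Cm 0 + Bm 0) Y⁆ = - (Cm 0 + Bm 0) ⁅X, Y⁆ := by
  intro X Y
  have pC := isPolyFun_finsum Cm hCm
  have pB := isPolyFun_finsum Bm hBm
  have zC := finsum_at_zero Cm
  have zB := finsum_at_zero Bm
  have eC : ∀ ε : ℂ, ε ≠ 0 → ∀ Z, A₁ Z + ε • ∑ᶠ j : ℕ, ε ^ j • Cm j Z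
      = ε • serLaurent A₁ Cm ε Z := by
    intro ε hε Z
    simp [serLaurent, smul_smul, hε]
  have eS : ∀ ε : ℂ, ∀ Z, (∑ᶠ j : ℕ, ε ^ j • Cm j Z) + ∑ᶠ j : ℕ, ε ^ j • Bm j Z
      = serLaurent A₁ Cm ε Z + serLaurent (-A₁) Bm ε Z := by
    intro ε Z
    simp only [serLaurent, LinearMap.neg_apply, smul_neg]
    abel
  have hBC : ∀ ε : ℂ, ε ≠ 0 → ∀ X Y : g,
      ⁅serLaurent (-A₁) Bm ε X, serLaurent A₁ Cm ε Y⁆ = 0 := by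
    intro ε hε X Y
    rw [← lie_skew, hCB ε hε, neg_zero]
  have pc := fun Z => (IsPolyFun.const (A₁ Z)).add (pC Z).mulX
  have ps := fun Z => (pC Z).add (pB Z)
  refine ⟨?_, ?_, ?_⟩
  · have := (((pc X).lie (pc Y)).add (pc ⁅X, Y⁆).mulX).eq_zero (by
      intro ε hε
      simp only [eC ε hε, smul_lie, lie_smul, hC ε hε, smul_neg]
      abel)
    simpa using this
  · have := (((pc X).lie (ps Y)).add (pc ⁅X, Y⁆)).eq_zero (by
      intro ε hε
      simp only [eC ε hε, eS ε, smul_lie, lie_add, hC ε hε, hCB ε hε, smul_neg, smul_zero]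
      abel)
    simp only [zC, zB, zero_smul, add_zero] at this
    exact eq_neg_of_add_eq_zero_left this
  · have := (((ps X).lie (ps Y)).add (ps ⁅X, Y⁆)).eq_zero (by
      intro ε hε
      simp only [eS ε, add_lie, lie_add, hC ε hε, hB ε hε, hCB ε hε, hBC ε hε]
      abel)
    simp only [zC, zB] at this
    exact eq_neg_of_add_eq_zero_left this
end

section
/- Let g and L be Lie algebras over ℂ, let r ≥ 1, and let k, l ≥ 0 with k + l ≤ r. Let (C_j)_{j ≥ −r}, (V_i)_{i ≥ 0}, (W_i)_{i ≥ 0}, (U_i)_{i ≥ 0} be families of ℂ-linear maps g → L, all but finitely many zero. For ε ≠ 0 set C(ε) := Σ_{j ≥ −r} ε^j C_j, V(ε) := −Σ_{i=1}^{r−k} ε^{−i} C_{−k−i} + Σ_{i ≥ 0} ε^i V_i, W(ε) := −Σ_{i=1}^{r−l} ε^{−i} C_{−l−i} + Σ_{i ≥ 0} ε^i W_i, and U(ε) := −Σ_{i=1}^{r−k−l} ε^{−i} C_{−k−l−i} + Σ_{i ≥ 0} ε^i U_i. Assume that for every ε ∈ ℂ∖{0} and all X, Y ∈ g: ⁅C(ε)(X),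 C(ε)(Y)⁆ = −C(ε)(⁅X,Y⁆), ⁅V(ε)(X), W(ε)(Y)⁆ = −U(ε)(⁅X,Y⁆), ⁅V(ε)(X), C(ε)(Y)⁆ = 0, and ⁅C(ε)(X), W(ε)(Y)⁆ = 0. Then for all X, Y ∈ g: ⁅(V_0 + C_{−k})(X), (W_0 + C_{−l})(Y)⁆ = −(U_0 + C_{−k−l})(⁅X,Y⁆). (This is the inductive Poisson step showing that the confluence of a simple pole with a pole of Poincaré rank r−1 produces the graded Takiff Lie–Poisson relations of degree r.) -/
/-!
The inductive Poisson step of the confluence: colliding a simple pole (residue `C(ε)`)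
with a pole of Poincaré rank `r−1` produces the graded Takiff Lie–Poisson relations of
degree `r`.

The residue `C(ε)` is encoded by a finitely supported family `Cm : ℤ → (g →ₗ[ℂ] L)`
(vanishing below `−r`), with `Cser Cm ε = Σᶠ_{j∈ℤ} ε^j • Cm j`.  A coefficient
`B^{[k]}(ε) = −Σ_{i=1}^{r−k} ε^{−i} C_{−k−i} + Σ_{i≥0} ε^i V_i` is encoded by the
finitely supported family `Vm : ℕ → (g →ₗ[ℂ] L)` of its regular Taylor coefficients,
via `Bser Cm Vm r k ε`.
-/

noncomputable section

/-- `Cser Cm ε X = Σᶠ_{j∈ℤ} ε^j • (Cm j)(X)`. -/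
def Cser {g L : Type*} [LieRing g] [LieAlgebra ℂ g] [LieRing L] [LieAlgebra ℂ L]
    (Cm : ℤ → (g →ₗ[ℂ] L)) (ε : ℂ) (X : g) : L :=
  ∑ᶠ j : ℤ, ε ^ j • Cm j X

/-- `Bser Cm Vm r k ε X = −Σ_{i=1}^{r−k} ε^{−i} • C_{−k−i}(X) + Σᶠ_{i∈ℕ} ε^i • (Vm i)(X)`. -/
def Bser {g L : Type*} [LieRing g] [LieAlgebra ℂ g] [LieRing L] [LieAlgebra ℂ L]
    (Cm : ℤ → (g →ₗ[ℂ] L)) (Vm : ℕ → (g →ₗ[ℂ] L)) (r k : ℕ) (ε : ℂ) (X : g) : L :=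
  -(∑ i ∈ Finset.Icc 1 (r - k), (ε ^ (-(i : ℤ))) • Cm (-(k : ℤ) - (i : ℤ)) X)
    + ∑ᶠ i : ℕ, ε ^ i • Vm i X

end

lemma shifted_series {g L : Type*} [LieRing g] [LieAlgebra ℂ g] [LieRing L] [LieAlgebra ℂ L]
    (r k : ℕ) (hk : k ≤ r) (Cm : ℤ → (g →ₗ[ℂ] L)) (Vm : ℕ → (g →ₗ[ℂ] L))
    (hC : (Function.support Cm).Finite) (hV : (Function.support Vm).Finite)
    (hlow : ∀ j : ℤ, j < -(r : ℤ) → Cm j = 0) :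
    ∃ N : ℕ, ∀ ε : ℂ, ε ≠ 0 → ∀ X : g,
      Bser Cm Vm r k ε X + ε ^ k • Cser Cm ε X
        = ∑ n ∈ Finset.range (N + 1), ε ^ n • (Vm n X + Cm ((n : ℤ) - k) X) := by
  obtain ⟨A, hA⟩ := hC.bddAbove
  obtain ⟨B, hB⟩ := hV.bddAbove
  have hA' : ∀ j : ℤ, A < j → Cm j = 0 := by
    intro j hj
    by_contra h
    exact absurd (hA h) (not_le.mpr hj)
  have hB' : ∀ j : ℕ, B < j → Vm j = 0 := by
    intro j hj
    by_contra h
    exact absurd (hB h) (not_le.mpr hj)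
  refine ⟨B + A.toNat + k, fun ε hε X => ?_⟩
  set N := B + A.toNat + k with hN
  have h1 : ∑ᶠ i : ℕ, ε ^ i • Vm i X = ∑ n ∈ Finset.range (N + 1), ε ^ n • Vm n X := by
    apply finsum_eq_sum_of_support_subset
    intro n hn
    by_contra h
    apply hn
    have : B < n := by
      simp at h
      omega
    simp [hB' n this]
  have h2 : Cser Cm ε X = ∑ j ∈ Finset.Ico (-(r : ℤ)) (N + 1 - k), ε ^ j • Cm j X := by
    apply finsum_eq_sum_of_support_subset
    intro n hn
    by_contra h
    apply hn
    rcases lt_or_ge n (-(r : ℤ)) with h' | h'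
    · simp [hlow n h']
    · have : A < n := by
        simp at h
        have := h (by omega)
        omega
      simp [hA' n this]
  have h3 : ∑ j ∈ Finset.Ico (-(r : ℤ)) (N + 1 - k), ε ^ j • Cm j X
      = ∑ j ∈ Finset.Ico (-(r : ℤ)) (-k), ε ^ j • Cm j X
        + ∑ j ∈ Finset.Ico (-(k : ℤ)) (N + 1 - k), ε ^ j • Cm j X := by
    rw [← Finset.sum_union (Finset.Ico_disjoint_Ico_consecutive _ _ _),
      Finset.Ico_union_Ico_eq_Ico (by omega) (by omega)]
  have h4 : ∑ i ∈ Finset.Icc 1 (r - k), (ε ^ (-(i : ℤ))) • Cm (-(k : ℤ) - (i : ℤ)) X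
      = ε ^ k • ∑ j ∈ Finset.Ico (-(r : ℤ)) (-k), ε ^ j • Cm j X := by
    rw [Finset.smul_sum]
    refine Finset.sum_nbij' (fun i : ℕ => -(k : ℤ) - i) (fun j : ℤ => (-k - j).toNat) ?_ ?_ ?_ ?_ ?_
    · intro i hi
      simp at hi ⊢
      omega
    · intro i hi
      simp at hi ⊢
      omega
    · intro i hi
      simp
    · intro i hi
      simp at hi ⊢
      omega
    · intro i hi
      rw [smul_smul, ← zpow_natCast, ← zpow_add₀ hε]
      congr 2
      ring
  have h5 : ∑ n ∈ Finset.range (N + 1), ε ^ n • Cm ((n : ℤ) - k) X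
      = ε ^ k • ∑ j ∈ Finset.Ico (-(k : ℤ)) (N + 1 - k), ε ^ j • Cm j X := by
    rw [Finset.smul_sum]
    refine Finset.sum_nbij' (fun i : ℕ => (i : ℤ) - k) (fun j : ℤ => (j + k).toNat) ?_ ?_ ?_ ?_ ?_
    · intro i hi
      simp at hi ⊢
      omega
    · intro i hi
      simp at hi ⊢
      omega
    · intro i hi
      simp
    · intro i hi
      simp at hi ⊢
      omega
    · intro i hi
      rw [smul_smul, ← zpow_natCast, ← zpow_natCast, ← zpow_add₀ hε]
      congr 2
      ring
  simp only [smul_add, Finset.sum_add_distrib]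
  rw [Bser, h1, h2, h3, h4, h5, smul_add]
  abel

/-- let `k + l ≤ r`, let `C(ε)`, `V(ε) = B^{[k]}(ε)`, `W(ε) = B^{[l]}(ε)`,
`U(ε) = B^{[k+l]}(ε)` be as above, and assume for all `ε ≠ 0` and `X, Y ∈ g`:
`⁅C(ε)X, C(ε)Y⁆ = −C(ε)⁅X,Y⁆`, `⁅V(ε)X, W(ε)Y⁆ = −U(ε)⁅X,Y⁆`, `⁅V(ε)X, C(ε)Y⁆ = 0`,
`⁅C(ε)X, W(ε)Y⁆ = 0`.  Then
`⁅(V₀ + C_{−k})X, (W₀ + C_{−l})Y⁆ = −(U₀ + C_{−k−l})⁅X,Y⁆` for all `X, Y`. -/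
theorem statement11 {g L : Type*} [LieRing g] [LieAlgebra ℂ g] [LieRing L] [LieAlgebra ℂ L]
    (r k l : ℕ) (hr : 1 ≤ r) (hkl : k + l ≤ r)
    (Cm : ℤ → (g →ₗ[ℂ] L)) (Vm Wm Um : ℕ → (g →ₗ[ℂ] L))
    (hCmfin : (Function.support Cm).Finite)
    (hVmfin : (Function.support Vm).Finite)
    (hWmfin : (Function.support Wm).Finite)
    (hUmfin : (Function.support Um).Finite)
    (hlow : ∀ j : ℤ, j < -(r : ℤ) → Cm j = 0)
    (hCC : ∀ ε : ℂ, ε ≠ 0 → ∀ X Y : g,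
      ⁅Cser Cm ε X, Cser Cm ε Y⁆ = - Cser Cm ε ⁅X, Y⁆)
    (hVW : ∀ ε : ℂ, ε ≠ 0 → ∀ X Y : g,
      ⁅Bser Cm Vm r k ε X, Bser Cm Wm r l ε Y⁆ = - Bser Cm Um r (k + l) ε ⁅X, Y⁆)
    (hVC : ∀ ε : ℂ, ε ≠ 0 → ∀ X Y : g,
      ⁅Bser Cm Vm r k ε X, Cser Cm ε Y⁆ = 0)
    (hCW : ∀ ε : ℂ, ε ≠ 0 → ∀ X Y : g,
      ⁅Cser Cm ε X, Bser Cm Wm r l ε Y⁆ = 0) :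
    ∀ X Y : g,
      ⁅Vm 0 X + Cm (-(k : ℤ)) X, Wm 0 Y + Cm (-(l : ℤ)) Y⁆
        = -(Um 0 ⁅X, Y⁆ + Cm (-(k : ℤ) - (l : ℤ)) ⁅X, Y⁆) := by
  intro X Y
  obtain ⟨N1, h1⟩ := shifted_series r k (by omega) Cm Vm hCmfin hVmfin hlow
  obtain ⟨N2, h2⟩ := shifted_series r l (by omega) Cm Wm hCmfin hWmfin hlow
  obtain ⟨N3, h3⟩ := shifted_series r (k + l) hkl Cm Um hCmfin hUmfin hlow
  rw [← sub_eq_zero, ← Module.forall_dual_apply_eq_zero_iff ℂ]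
  intro φ
  let F : ℂ → L := fun ε =>
    ⁅∑ n ∈ Finset.range (N1 + 1), ε ^ n • (Vm n X + Cm ((n : ℤ) - k) X),
      ∑ n ∈ Finset.range (N2 + 1), ε ^ n • (Wm n Y + Cm ((n : ℤ) - l) Y)⁆
    - -(∑ n ∈ Finset.range (N3 + 1),
      ε ^ n • (Um n ⁅X, Y⁆ + Cm ((n : ℤ) - (k + l : ℕ)) ⁅X, Y⁆))
  have hF : ∀ ε : ℂ, ε ≠ 0 → φ (F ε) = 0 := by
    intro ε hε
    have : F ε = 0 := by
      simp only [F]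
      rw [← h1 ε hε, ← h2 ε hε, ← h3 ε hε]
      simp only [lie_add, add_lie, lie_smul, smul_lie, hVW ε hε, hVC ε hε, hCW ε hε, hCC ε hε,
        smul_zero, zero_add, smul_neg, pow_add]
      rw [smul_smul, mul_comm (ε ^ l)]
      abel
    rw [this, map_zero]
  have hcont : Continuous (fun ε => φ (F ε)) := by
    simp only [F, sum_lie, lie_sum, lie_smul, smul_lie, map_sub, map_neg, map_sum, map_smul,
      smul_eq_mul]
    fun_prop
  have h0 : (fun ε => φ (F ε)) = fun _ => 0 :=
    Continuous.ext_on (dense_compl_singleton (0 : ℂ)) hcont continuous_const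
      (fun ε hε => hF ε hε)
  have h00 := congrFun h0 0
  have e : ∀ (N : ℕ) (a : ℕ → L), ∑ n ∈ Finset.range (N + 1), (0 : ℂ) ^ n • a n = a 0 := by
    intro N a
    simp [Finset.sum_range_succ']
  simp only [F, e] at h00
  have hz : ((0 : ℕ) : ℤ) - ((k + l : ℕ) : ℤ) = -(k : ℤ) - l := by
    push_cast
    ring
  rw [hz] at h00
  simpa only [Nat.cast_zero, zero_sub] using h00
end

section
/- Let m ≥ 1 and n ≥ 2, let u_1, …, u_n ∈ ℂ be pairwise distinct, and let (Q_1,P_1), …, (Q_n,P_n) be n pairs of m×m matrices of independent commuting indeterminates. For each i set H_i := Σ_{j ≠ i} Tr(Q_i P_i Q_j P_j)/(u_i − u_j). Then with respect to the canonical Poisson bracket, the lifted Schlesinger Hamiltonians Poisson-commute with the moment maps of the inner group action: {H_i, (P_k Q_k)_{ab}} = 0 for all 1 ≤ i,k ≤ n and all 1 ≤ a,b ≤ m. -/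
/-!
The lifted Schlesinger Hamiltonians Poisson-commute with the moment maps `P_kQ_k` of the
inner group action.
-/

open MvPolynomial

noncomputable section

/-- The lifted Schlesinger Hamiltonian `H_i = Σ_{j≠i} Tr(Q_iP_iQ_jP_j)/(u_i−u_j)`. -/
def Hschles (n m : ℕ) (u : Fin n → ℂ) (i : Fin n) : MvPolynomial (Idx n m) ℂ :=
  ∑ j ∈ Finset.univ.erase i,
    C ((u i - u j)⁻¹) * (Qm n m i * Pm n m i * Qm n m j * Pm n m j).trace

end

/-- The Hamiltonian vector field `f ↦ {f, g}` as a derivation. -/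
noncomputable def poisD {N m : ℕ} (g : MvPolynomial (Idx N m) ℂ) :
    Derivation ℂ (MvPolynomial (Idx N m) ℂ) (MvPolynomial (Idx N m) ℂ) :=
  ∑ α : Fin N, ∑ i : Fin m, ∑ j : Fin m,
    (pderiv (α, false, j, i) g • pderiv (α, true, i, j)
      - pderiv (α, true, i, j) g • pderiv (α, false, j, i))

theorem poisD_apply {N m : ℕ} (f g : MvPolynomial (Idx N m) ℂ) : poisD g f = pois f g := by
  have hs : ∀ {ι : Type} (s : Finset ι)
      (F : ι → Derivation ℂ (MvPolynomial (Idx N m) ℂ) (MvPolynomial (Idx N m) ℂ)),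
      (∑ x ∈ s, F x) f = ∑ x ∈ s, F x f := by
    intro ι s F
    exact map_sum (Derivation.coeFnAddMonoidHom.comp (AddMonoidHom.id _) |> fun φ =>
      (Pi.evalAddMonoidHom _ f).comp φ) F s
  simp only [poisD, pois, hs, Derivation.sub_apply, Derivation.smul_apply, smul_eq_mul]
  refine Finset.sum_congr rfl fun α _ => Finset.sum_congr rfl fun i _ =>
    Finset.sum_congr rfl fun j _ => ?_
  ring

theorem pois_P {N m : ℕ} (g : MvPolynomial (Idx N m) ℂ) (β : Fin N) (x y : Fin m) :
    pois (X (β, true, x, y)) g = pderiv (β, false, y, x) g := by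
  unfold pois
  rw [Finset.sum_eq_single β, Finset.sum_eq_single x, Finset.sum_eq_single y]
  · simp [pderiv_X, Pi.single_apply]
  all_goals simp +contextual [pderiv_X, Pi.single_apply, eq_comm]

theorem pois_Q {N m : ℕ} (g : MvPolynomial (Idx N m) ℂ) (β : Fin N) (x y : Fin m) :
    pois (X (β, false, x, y)) g = - pderiv (β, true, y, x) g := by
  unfold pois
  rw [Finset.sum_eq_single β, Finset.sum_eq_single y, Finset.sum_eq_single x]
  · simp [pderiv_X, Pi.single_apply]
  all_goals simp +contextual [pderiv_X, Pi.single_apply, eq_comm]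

theorem dP {N m : ℕ} (k β : Fin N) (a b x y : Fin m) :
    pderiv (β, true, y, x) ((Pm N m k * Qm N m k) a b)
      = if β = k ∧ y = a then X (k, false, x, b) else 0 := by
  simp only [Matrix.mul_apply, Pm, Qm, Matrix.of_apply, map_sum, Derivation.leibniz, pderiv_X,
    Pi.single_apply, smul_eq_mul, Prod.mk.injEq]
  rw [Finset.sum_eq_single x]
  · by_cases h1 : β = k <;> by_cases h2 : y = a <;> simp [h1, h2, eq_comm]
    all_goals simp_all [eq_comm]
  all_goals simp +contextual [eq_comm]

theorem dQ {N m : ℕ} (k β : Fin N) (a b x y : Fin m) :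
    pderiv (β, false, y, x) ((Pm N m k * Qm N m k) a b)
      = if β = k ∧ x = b then X (k, true, a, y) else 0 := by
  simp only [Matrix.mul_apply, Pm, Qm, Matrix.of_apply, map_sum, Derivation.leibniz, pderiv_X,
    Pi.single_apply, smul_eq_mul, Prod.mk.injEq]
  rw [Finset.sum_eq_single y]
  · by_cases h1 : β = k <;> by_cases h2 : x = b <;> simp [h1, h2, eq_comm]
    all_goals simp_all [eq_comm]
  all_goals simp +contextual [eq_comm]

theorem poisD_QP {N m : ℕ} (k β : Fin N) (a b x y : Fin m) :
    poisD ((Pm N m k * Qm N m k) a b) ((Qm N m β * Pm N m β) x y) = 0 := by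
  rw [Matrix.mul_apply (M := Qm N m β)]
  simp only [map_sum, Derivation.leibniz, smul_eq_mul]
  simp only [Qm.eq_1 N m β, Pm.eq_1 N m β, Matrix.of_apply, poisD_apply, pois_P, pois_Q, dP, dQ]
  by_cases h : β = k
  · subst h
    simp [Finset.sum_add_distrib, mul_comm]
  · simp [h]

/-- the lifted Schlesinger Hamiltonians Poisson-commute with the entries of
the inner moment maps: `{H_i, (P_kQ_k)_{ab}} = 0`. -/
theorem statement13 (m n : ℕ) (hm : 1 ≤ m) (hn : 2 ≤ n)
    (u : Fin n → ℂ) (hu : Function.Injective u)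
    (i k : Fin n) (a b : Fin m) :
    pois (Hschles n m u i) ((Pm n m k * Qm n m k) a b) = 0 := by
  rw [← poisD_apply, Hschles, map_sum]
  refine Finset.sum_eq_zero fun j _ => ?_
  rw [Matrix.mul_assoc (Qm n m i * Pm n m i), Matrix.trace]
  simp only [Matrix.diag_apply, Matrix.mul_apply (M := Qm n m i * Pm n m i)]
  simp only [Derivation.leibniz, map_sum, poisD_QP, derivation_C, smul_zero, add_zero,
    Finset.sum_const_zero]
end

section
/- Let m ≥ 1 and n ≥ 2, let u_1, …, u_n ∈ ℂ be pairwise distinct, and let (Q_1,P_1), …, (Q_n,P_n) be n pairs of m×m matrices of independent commuting indeterminates. For each i set H_i := Σ_{j ≠ i} Tr(Q_i P_i Q_j P_j)/(u_i − u_j). Then with respect to the canonical Poisson bracket the lifted Schlesinger Hamiltonians pairwise Poisson-commute: {H_i, H_j} = 0 for all 1 ≤ i,j ≤ n. -/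
/-!
The lifted Schlesinger Hamiltonians pairwise Poisson-commute (involutivity of the lifted Schlesinger/Gaudin Hamiltonians).
-/

open MvPolynomial

/-- The Hamiltonian derivation `{·, g}`. -/
noncomputable def adP {N m : ℕ} (g : MvPolynomial (Idx N m) ℂ) :
    Derivation ℂ (MvPolynomial (Idx N m) ℂ) (MvPolynomial (Idx N m) ℂ) :=
  ∑ α : Fin N, ∑ i : Fin m, ∑ j : Fin m,
    (pderiv (α, false, j, i) g • pderiv (α, true, i, j)
      - pderiv (α, true, i, j) g • pderiv (α, false, j, i))

lemma derSum {R : Type*} [CommRing R] [Algebra ℂ R] {ι : Type*} (s : Finset ι)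
    (D : ι → Derivation ℂ R R) (f : R) : (∑ i ∈ s, D i) f = ∑ i ∈ s, D i f := by
  classical
  induction s using Finset.induction_on with
  | empty => simp
  | insert a s ha ih => simp [Finset.sum_insert ha, ih]

lemma pois_eq_adP {N m : ℕ} (f g : MvPolynomial (Idx N m) ℂ) : pois f g = adP g f := by
  simp only [pois, adP, derSum, Derivation.sub_apply, Derivation.smul_apply, smul_eq_mul]
  refine Finset.sum_congr rfl fun α _ => Finset.sum_congr rfl fun i _ =>
    Finset.sum_congr rfl fun j _ => ?_
  ring

lemma pois_anti {N m : ℕ} (f g : MvPolynomial (Idx N m) ℂ) : pois f g = - pois g f := by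
  simp only [pois, ← Finset.sum_neg_distrib, neg_sub]

lemma adP_P {N m : ℕ} (g : MvPolynomial (Idx N m) ℂ) (α : Fin N) (i j : Fin m) :
    adP g (X (α, true, i, j)) = pderiv (α, false, j, i) g := by
  simp only [adP, derSum, Derivation.sub_apply, Derivation.smul_apply, smul_eq_mul, pderiv_X,
    Pi.single_apply, Prod.mk.injEq]
  simp [ite_and, Finset.sum_ite_eq]

lemma adP_Q {N m : ℕ} (g : MvPolynomial (Idx N m) ℂ) (α : Fin N) (i j : Fin m) :
    adP g (X (α, false, i, j)) = - pderiv (α, true, j, i) g := by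
  simp only [adP, derSum, Derivation.sub_apply, Derivation.smul_apply, smul_eq_mul, pderiv_X,
    Pi.single_apply, Prod.mk.injEq]
  simp [ite_and, Finset.sum_ite_eq]

/-- The residue matrix `A = Q P`. -/
noncomputable def Am (N m : ℕ) (α : Fin N) : Matrix (Fin m) (Fin m) (MvPolynomial (Idx N m) ℂ) :=
  Qm N m α * Pm N m α

lemma Am_apply {N m : ℕ} (α : Fin N) (a b : Fin m) :
    Am N m α a b = ∑ x, X (α, false, a, x) * X (α, true, x, b) := by
  simp [Am, Matrix.mul_apply, Qm, Pm]

lemma pderivQ_A {N m : ℕ} (α β : Fin N) (x y c d : Fin m) :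
    pderiv (α, false, x, y) (Am N m β c d)
      = if α = β then if x = c then X (α, true, y, d) else 0 else 0 := by
  rw [Am_apply]
  simp only [map_sum, Derivation.leibniz, smul_eq_mul, pderiv_X, Pi.single_apply, Prod.mk.injEq]
  by_cases h : α = β
  · subst h
    by_cases h' : x = c
    · subst h'; simp
    · have : ¬ c = x := fun h => h' h.symm
      simp [this, h']
  · have : ¬ β = α := fun h' => h h'.symm
    simp [this, h]

lemma pderivP_A {N m : ℕ} (α β : Fin N) (x y c d : Fin m) :
    pderiv (α, true, x, y) (Am N m β c d)
      = if α = β then if y = d then X (α, false, c, x) else 0 else 0 := by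
  rw [Am_apply]
  simp only [map_sum, Derivation.leibniz, smul_eq_mul, pderiv_X, Pi.single_apply, Prod.mk.injEq]
  by_cases h : α = β
  · subst h
    by_cases h' : y = d
    · subst h'; simp
    · have : ¬ d = y := fun h => h' h.symm
      simp [this, h']
  · have : ¬ β = α := fun h' => h h'.symm
    simp [this, h]

lemma adP_A {N m : ℕ} (α β : Fin N) (a b c d : Fin m) :
    adP (Am N m β c d) (Am N m α a b)
      = if α = β then (if b = c then Am N m α a d else 0) - (if a = d then Am N m α c b else 0)
        else 0 := by
  rw [Am_apply α a b]
  simp only [map_sum, Derivation.leibniz, smul_eq_mul, adP_P, adP_Q, pderivQ_A, pderivP_A]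
  by_cases h : α = β
  · subst h
    by_cases h1 : b = c <;> by_cases h2 : a = d <;>
      simp [h1, h2, Am_apply, Finset.sum_add_distrib, sub_eq_add_neg, mul_comm]
  · simp [h]

/-- `T_{jl} = Tr(A_j A_l)`. -/
noncomputable def Tm (N m : ℕ) (j l : Fin N) : MvPolynomial (Idx N m) ℂ :=
  (Am N m j * Am N m l).trace

lemma der_trace {N m : ℕ}
    (D : Derivation ℂ (MvPolynomial (Idx N m) ℂ) (MvPolynomial (Idx N m) ℂ)) (j l : Fin N) :
    D (Tm N m j l) = ((Am N m j).map D * Am N m l).trace + ((Am N m l).map D * Am N m j).trace := by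
  rw [Matrix.trace_mul_comm ((Am N m l).map D)]
  simp only [Tm, Matrix.trace, Matrix.diag, Matrix.mul_apply, map_sum, Derivation.leibniz,
    smul_eq_mul, Matrix.map_apply, ← Finset.sum_add_distrib]
  refine Finset.sum_congr rfl fun i _ => Finset.sum_congr rfl fun j _ => ?_
  ring

lemma trace_ad {N m : ℕ} (k j : Fin N) (a b : Fin m)
    (Y : Matrix (Fin m) (Fin m) (MvPolynomial (Idx N m) ℂ)) :
    ((Am N m j).map (adP (Am N m k a b)) * Y).trace
      = if k = j then (Y * Am N m k - Am N m k * Y) a b else 0 := by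
  simp only [Matrix.trace, Matrix.diag, Matrix.mul_apply, Matrix.map_apply, adP_A]
  by_cases h : j = k
  · subst h
    simp only [if_true, sub_mul, Finset.sum_sub_distrib, ite_mul, zero_mul, Matrix.sub_apply,
      Matrix.mul_apply]
    rw [Finset.sum_comm]
    simp [mul_comm]
  · have : ¬ k = j := fun h' => h h'.symm
    simp [this, h]

lemma adT_A {N m : ℕ} (k j l : Fin N) :
    (Am N m k).map (adP (Tm N m j l))
      = (if k = j then Am N m k * Am N m l - Am N m l * Am N m k else 0)
        + (if k = l then Am N m k * Am N m j - Am N m j * Am N m k else 0) := by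
  ext1 a b
  rw [Matrix.map_apply, ← pois_eq_adP, pois_anti, pois_eq_adP, der_trace, trace_ad, trace_ad]
  split_ifs <;> simp <;> ring

/-- `F(x,y,z) = Tr(A_x A_y A_z) - Tr(A_x A_z A_y)`. -/
noncomputable def Fm (N m : ℕ) (x y z : Fin N) : MvPolynomial (Idx N m) ℂ :=
  (Am N m x * Am N m y * Am N m z).trace - (Am N m x * Am N m z * Am N m y).trace

lemma Fm_swap {N m : ℕ} (x y z : Fin N) : Fm N m x z y = - Fm N m x y z := by
  simp [Fm]

lemma Fm_rot {N m : ℕ} (x y z : Fin N) : Fm N m y z x = Fm N m x y z := by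
  simp only [Fm]
  rw [Matrix.trace_mul_cycle (Am N m y) (Am N m z), Matrix.trace_mul_cycle (Am N m x) (Am N m z)]

lemma trace_comm_F {N m : ℕ} (x y z : Fin N) :
    ((Am N m x * Am N m y - Am N m y * Am N m x) * Am N m z).trace = Fm N m x y z := by
  rw [sub_mul, Matrix.trace_sub, Fm, Matrix.trace_mul_cycle (Am N m y) (Am N m x),
    Matrix.trace_mul_cycle (Am N m z) (Am N m y)]

lemma pois_T {N m : ℕ} (i k j l : Fin N) :
    pois (Tm N m i k) (Tm N m j l)
      = (if i = j then Fm N m i l k else 0) + (if i = l then Fm N m i j k else 0)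
        + ((if k = j then Fm N m k l i else 0) + (if k = l then Fm N m k j i else 0)) := by
  rw [pois_eq_adP, der_trace, adT_A, adT_A, add_mul, add_mul, Matrix.trace_add, Matrix.trace_add]
  simp only [ite_mul, zero_mul, apply_ite Matrix.trace, Matrix.trace_zero, trace_comm_F]

lemma H_eq {n m : ℕ} (u : Fin n → ℂ) (i : Fin n) :
    Hschles n m u i = ∑ k, (u i - u k)⁻¹ • Tm n m i k := by
  rw [Hschles, Finset.sum_erase _ (by simp)]
  simp [Tm, Am, Matrix.mul_assoc, MvPolynomial.smul_eq_C_mul]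

lemma pois_HT {n m : ℕ} (u : Fin n → ℂ) (i : Fin n) (g : MvPolynomial (Idx n m) ℂ) :
    pois (Hschles n m u i) g = ∑ k, (u i - u k)⁻¹ • pois (Tm n m i k) g := by
  simp only [pois_eq_adP, H_eq, map_sum, Derivation.map_smul]

lemma pois_HH {n m : ℕ} (u : Fin n → ℂ) (i j : Fin n) :
    pois (Hschles n m u i) (Hschles n m u j)
      = ∑ k, ∑ l, (u i - u k)⁻¹ • (u j - u l)⁻¹ • pois (Tm n m i k) (Tm n m j l) := by
  rw [pois_HT]
  refine Finset.sum_congr rfl fun k _ => ?_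
  rw [pois_anti, pois_HT, ← Finset.sum_neg_distrib, Finset.smul_sum]
  refine Finset.sum_congr rfl fun l _ => ?_
  rw [pois_anti (Tm n m j l), smul_neg, smul_neg, smul_neg, neg_neg]

/-- the lifted Schlesinger Hamiltonians pairwise Poisson-commute:
`{H_i, H_j} = 0` for all `i, j`. -/
theorem statement14 (m n : ℕ) (hm : 1 ≤ m) (hn : 2 ≤ n)
    (u : Fin n → ℂ) (hu : Function.Injective u) (i j : Fin n) :
    pois (Hschles n m u i) (Hschles n m u j) = 0 := by
  by_cases hij : i = j
  · subst hij
    simp [pois]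
  rw [pois_HH]
  simp only [pois_T, if_neg hij, zero_add, smul_add, Finset.sum_add_distrib, smul_ite, smul_zero,
    Finset.sum_ite_eq, Finset.mem_univ, if_true]
  rw [Finset.sum_comm (f := fun k l => if k = j then _ else _)]
  simp only [Finset.sum_ite_eq', Finset.mem_univ, if_true]
  rw [← Finset.sum_add_distrib, ← Finset.sum_add_distrib]
  refine Finset.sum_eq_zero fun k _ => ?_
  have e1 : Fm n m j k i = Fm n m i j k := Fm_rot i j k
  have e2 : Fm n m k j i = - Fm n m i j k := by
    rw [Fm_swap k i j, ← Fm_rot k i j]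
  by_cases hki : k = i
  · subst hki
    have h0 : Fm n m k j k = 0 := by
      rw [← Fm_rot k j k, Fm, sub_eq_zero, Matrix.trace_mul_cycle]
    simp [e1, h0]
  by_cases hkj : k = j
  · subst hkj
    have h0 : Fm n m i k k = 0 := by simp [Fm]
    simp [e1, e2, h0]
  have a1 : u i - u j ≠ 0 := sub_ne_zero.2 fun h => hij (hu h)
  have a1' : u j - u i ≠ 0 := sub_ne_zero.2 fun h => hij (hu h.symm)
  have a2 : u i - u k ≠ 0 := sub_ne_zero.2 fun h => hki (hu h.symm)
  have a3 : u j - u k ≠ 0 := sub_ne_zero.2 fun h => hkj (hu h.symm)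
  have key : (u i - u k)⁻¹ * (u j - u i)⁻¹ + ((u i - u j)⁻¹ * (u j - u k)⁻¹
      - (u i - u k)⁻¹ * (u j - u k)⁻¹) = 0 := by
    rw [← neg_sub (u i) (u j), inv_neg]
    field_simp
    ring
  rw [e1, e2]
  simp only [smul_neg, smul_smul, ← sub_eq_add_neg, ← sub_smul, ← add_smul]
  rw [key, zero_smul]
end

section
/- Let m ≥ 1 and let (Q^0,P^0), (Q^1,P^1), (Q_0,P_0), (Q_1,P_1) be four pairs of m×m matrices of independent commuting indeterminates. Set A^0 := Q^0P^0, A^1 := Q^1P^1, A_0 := Q_0P_0 + Q_1P_1, A_1 := Q_0P_1, and for u ∈ ℂ∖{0,1} and t_1 ∈ ℂ∖{0} define H_u := Tr( A_0·(A^0/u + A^1/(u−1)) ) − t_1·Tr( A_1·(A^0/u^2 + A^1/(u−1)^2) ) and H_1 := Tr( A_1·(A^0/u + A^1/(u−1)) ) + Tr(A_0^2)/(2 t_1). Then: (i) with respect to the canonical Poisson bracket, {H_u, H_1} = 0 for every such u, t_1; (ii) holding the matrix indeterminates fixed, ∂H_u/∂t_1 = ∂H_1/∂u on (ℂ∖{0,1})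 × (ℂ∖{0}). Hence H_u du + H_1 dt_1 is a closed one-form along the flows, so the isomonodromic τ-function of the system with simple poles at 0, 1 and a second-order pole at u is well defined. -/
/-!
The confluent isomonodromic Hamiltonians for the connection
`A(λ) = A⁰/λ + A¹/(λ−1) + A₀/(λ−u) + t₁A₁/(λ−u)²` in lifted Darboux coordinates:
they Poisson-commute and their cross-derivatives in `(u, t₁)` agree, so
`H_u du + H_1 dt₁` defines the isomonodromic τ-function.
-/

open MvPolynomial

noncomputable section

/-- `A⁰ = Q⁰P⁰` (residue at `0`). -/
def A0s (m : ℕ) : Matrix (Fin m) (Fin m) (MvPolynomial (Idx 4 m) ℂ) := Qm 4 m 0 * Pm 4 m 0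

/-- `A¹ = Q¹P¹` (residue at `1`). -/
def A1s (m : ℕ) : Matrix (Fin m) (Fin m) (MvPolynomial (Idx 4 m) ℂ) := Qm 4 m 1 * Pm 4 m 1

/-- `A₀ = Q₀P₀ + Q₁P₁` (Takiff residue at `u`). -/
def Au0 (m : ℕ) : Matrix (Fin m) (Fin m) (MvPolynomial (Idx 4 m) ℂ) :=
  Qm 4 m 2 * Pm 4 m 2 + Qm 4 m 3 * Pm 4 m 3

/-- `A₁ = Q₀P₁` (Takiff leading coefficient at `u`). -/
def Au1 (m : ℕ) : Matrix (Fin m) (Fin m) (MvPolynomial (Idx 4 m) ℂ) := Qm 4 m 2 * Pm 4 m 3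

/-- `H_u = Tr(A₀(A⁰/u + A¹/(u−1))) − t₁·Tr(A₁(A⁰/u² + A¹/(u−1)²))`. -/
def Hu (m : ℕ) (u t₁ : ℂ) : MvPolynomial (Idx 4 m) ℂ :=
  (Au0 m * (u⁻¹ • A0s m + (u - 1)⁻¹ • A1s m)).trace
    - t₁ • (Au1 m * ((u ^ 2)⁻¹ • A0s m + ((u - 1) ^ 2)⁻¹ • A1s m)).trace

/-- `H_1 = Tr(A₁(A⁰/u + A¹/(u−1))) + Tr(A₀²)/(2t₁)`. -/
def H1 (m : ℕ) (u t₁ : ℂ) : MvPolynomial (Idx 4 m) ℂ :=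
  (Au1 m * (u⁻¹ • A0s m + (u - 1)⁻¹ • A1s m)).trace
    + (2 * t₁)⁻¹ • (Au0 m * Au0 m).trace

end


section helpers

variable {m : ℕ}

local notation "Mat" => Matrix (Fin m) (Fin m) (MvPolynomial (Idx 4 m) ℂ)

set_option linter.unusedSimpArgs false

lemma map_mul_pd (k : Idx 4 m) (M N : Mat) :
    (M * N).map (pderiv k) = M.map (pderiv k) * N + M * N.map (pderiv k) := by
  ext i j
  simp only [Matrix.map_apply, Matrix.mul_apply, Matrix.add_apply, map_sum, Derivation.leibniz,
    smul_eq_mul, ← Finset.sum_add_distrib]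
  refine congrArg _ (Finset.sum_congr rfl fun x _ => ?_)
  ring

lemma map_add_pd (k : Idx 4 m) (M N : Mat) :
    (M + N).map (pderiv k) = M.map (pderiv k) + N.map (pderiv k) := by
  ext i j
  simp

lemma map_smul_pd (k : Idx 4 m) (c : ℂ) (M : Mat) :
    (c • M).map (pderiv k) = c • M.map (pderiv k) := by
  ext i j
  simp

lemma pd_trace (k : Idx 4 m) (M : Mat) :
    pderiv k M.trace = (M.map (pderiv k)).trace := by
  simp [Matrix.trace]

lemma map_Q (α β : Fin 4) (i j : Fin m) :
    (Qm 4 m α).map (pderiv (β, false, i, j)) = if α = β then Matrix.single i j 1 else 0 := by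
  ext a b
  simp only [Qm, Matrix.map_apply, Matrix.of_apply, pderiv_X, Pi.single_apply]
  by_cases h : α = β <;> by_cases h1 : a = i <;> by_cases h2 : b = j <;>
    simp [h, h1, h2, Matrix.single_apply, eq_comm (a := i), eq_comm (a := j)]

lemma map_Q' (α β : Fin 4) (i j : Fin m) :
    (Qm 4 m α).map (pderiv (β, true, i, j)) = 0 := by
  ext a b
  simp [Qm, pderiv_X, Pi.single_apply]

lemma map_P (α β : Fin 4) (i j : Fin m) :
    (Pm 4 m α).map (pderiv (β, true, i, j)) = if α = β then Matrix.single i j 1 else 0 := by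
  ext a b
  simp only [Pm, Matrix.map_apply, Matrix.of_apply, pderiv_X, Pi.single_apply]
  by_cases h : α = β <;> by_cases h1 : a = i <;> by_cases h2 : b = j <;>
    simp [h, h1, h2, Matrix.single_apply, eq_comm (a := i), eq_comm (a := j)]

lemma map_P' (α β : Fin 4) (i j : Fin m) :
    (Pm 4 m α).map (pderiv (β, false, i, j)) = 0 := by
  ext a b
  simp [Pm, pderiv_X, Pi.single_apply]

lemma tr_single (X Y : Mat) (i j : Fin m) :
    (X * (Matrix.single i j 1 * Y)).trace = (Y * X) j i := by
  rw [← Matrix.mul_assoc, Matrix.trace_mul_comm, ← Matrix.mul_assoc, Matrix.trace_mul_comm]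
  simp [Matrix.trace_single_mul]

lemma tr_single_l (Y : Mat) (i j : Fin m) :
    (Matrix.single i j 1 * Y).trace = Y j i := by
  simp [Matrix.trace_single_mul]

lemma tr_single_r (Y : Mat) (i j : Fin m) :
    (Y * Matrix.single i j 1).trace = Y j i := by
  rw [Matrix.trace_mul_comm]; simp [Matrix.trace_single_mul]

lemma tr_single_r2 (X Y : Mat) (i j : Fin m) :
    (X * (Y * Matrix.single i j 1)).trace = (X * Y) j i := by
  rw [← Matrix.mul_assoc, tr_single_r]

lemma tr_single_r3 (X Y Z : Mat) (i j : Fin m) :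
    (X * (Y * (Z * Matrix.single i j 1))).trace = (X * (Y * Z)) j i := by
  rw [← Matrix.mul_assoc, ← Matrix.mul_assoc, tr_single_r, Matrix.mul_assoc]

lemma tr_single3 (X Y Z : Mat) (i j : Fin m) :
    (X * (Y * (Matrix.single i j 1 * Z))).trace = (Z * (X * Y)) j i := by
  rw [← Matrix.mul_assoc, tr_single]

lemma sum_tr (M N : Mat) : ∑ i, ∑ j, M j i * N i j = (M * N).trace := by
  rw [Finset.sum_comm]
  simp [Matrix.trace, Matrix.mul_apply]

/-- a polynomial has the given gradient matrices. -/
def HasGrad (f : MvPolynomial (Idx 4 m) ℂ) (GP GQ : Fin 4 → Mat) : Prop :=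
  ∀ α i j, pderiv (α, true, i, j) f = GP α j i ∧ pderiv (α, false, i, j) f = GQ α j i

lemma pois_grad {f g : MvPolynomial (Idx 4 m) ℂ} {FP FQ GP GQ : Fin 4 → Mat}
    (hf : HasGrad f FP FQ) (hg : HasGrad g GP GQ) :
    pois f g = ∑ α, ((FP α * GQ α).trace - (GP α * FQ α).trace) := by
  unfold pois
  refine Finset.sum_congr rfl fun α _ => ?_
  simp only [(hf _ _ _).1, (hf _ _ _).2, (hg _ _ _).1, (hg _ _ _).2, Finset.sum_sub_distrib,
    sum_tr]

lemma hasGrad_mk {f : MvPolynomial (Idx 4 m) ℂ} {p0 p1 p2 p3 q0 q1 q2 q3 : Mat}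
    (h0 : ∀ i j, pderiv (0, true, i, j) f = p0 j i ∧ pderiv (0, false, i, j) f = q0 j i)
    (h1 : ∀ i j, pderiv (1, true, i, j) f = p1 j i ∧ pderiv (1, false, i, j) f = q1 j i)
    (h2 : ∀ i j, pderiv (2, true, i, j) f = p2 j i ∧ pderiv (2, false, i, j) f = q2 j i)
    (h3 : ∀ i j, pderiv (3, true, i, j) f = p3 j i ∧ pderiv (3, false, i, j) f = q3 j i) :
    HasGrad f ![p0, p1, p2, p3] ![q0, q1, q2, q3] := by
  intro α i j
  fin_cases α
  exacts [h0 i j, h1 i j, h2 i j, h3 i j]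

/-- gradient of `Tr (X Y)`-type pieces, with `B = a A⁰ + b A¹`. -/
lemma grad_A0B (a b : ℂ) : HasGrad (Au0 m * (a • A0s m + b • A1s m)).trace
    ![a • (Au0 m * Qm 4 m 0), b • (Au0 m * Qm 4 m 1),
      (a • A0s m + b • A1s m) * Qm 4 m 2, (a • A0s m + b • A1s m) * Qm 4 m 3]
    ![a • (Pm 4 m 0 * Au0 m), b • (Pm 4 m 1 * Au0 m),
      Pm 4 m 2 * (a • A0s m + b • A1s m), Pm 4 m 3 * (a • A0s m + b • A1s m)] := by
  refine hasGrad_mk ?_ ?_ ?_ ?_ <;> intro i j <;>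
  simp [Au0, A0s, A1s, pd_trace, map_mul_pd, map_add_pd, map_smul_pd, map_Q, map_Q', map_P, map_P',
    Matrix.mul_add, Matrix.add_mul, Matrix.mul_assoc, tr_single, tr_single_l, tr_single_r, tr_single_r2,
    tr_single_r3, tr_single3]

lemma grad_A1B (a b : ℂ) : HasGrad (Au1 m * (a • A0s m + b • A1s m)).trace
    ![a • (Au1 m * Qm 4 m 0), b • (Au1 m * Qm 4 m 1),
      0, (a • A0s m + b • A1s m) * Qm 4 m 2]
    ![a • (Pm 4 m 0 * Au1 m), b • (Pm 4 m 1 * Au1 m),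
      Pm 4 m 3 * (a • A0s m + b • A1s m), 0] := by
  refine hasGrad_mk ?_ ?_ ?_ ?_ <;> intro i j <;>
  simp [Au1, A0s, A1s, pd_trace, map_mul_pd, map_add_pd, map_smul_pd, map_Q, map_Q', map_P, map_P',
    Matrix.mul_add, Matrix.add_mul, Matrix.mul_assoc, tr_single, tr_single_l, tr_single_r, tr_single_r2,
    tr_single_r3, tr_single3]

lemma grad_A0A0 : HasGrad (Au0 m * Au0 m).trace
    ![0, 0, (2 : ℂ) • (Au0 m * Qm 4 m 2), (2 : ℂ) • (Au0 m * Qm 4 m 3)]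
    ![0, 0, (2 : ℂ) • (Pm 4 m 2 * Au0 m), (2 : ℂ) • (Pm 4 m 3 * Au0 m)] := by
  refine hasGrad_mk ?_ ?_ ?_ ?_ <;> intro i j <;>
  simp [Au0, pd_trace, map_mul_pd, map_add_pd, map_Q, map_Q', map_P, map_P',
    Matrix.mul_add, Matrix.add_mul, Matrix.mul_assoc, tr_single, tr_single_l, tr_single_r, tr_single_r2,
    tr_single_r3, tr_single3, two_smul] <;> constructor <;> ring

lemma HasGrad.add {f g : MvPolynomial (Idx 4 m) ℂ} {FP FQ GP GQ : Fin 4 → Mat}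
    (hf : HasGrad f FP FQ) (hg : HasGrad g GP GQ) :
    HasGrad (f + g) (FP + GP) (FQ + GQ) := fun α i j => by
  simp [(hf _ _ _).1, (hf _ _ _).2, (hg _ _ _).1, (hg _ _ _).2]

lemma HasGrad.smul {f : MvPolynomial (Idx 4 m) ℂ} {FP FQ : Fin 4 → Mat} (c : ℂ)
    (hf : HasGrad f FP FQ) :
    HasGrad (c • f) (c • FP) (c • FQ) := fun α i j => by
  simp [(hf _ _ _).1, (hf _ _ _).2]

lemma key_s16 (a b t : ℂ) (ht : t ≠ 0) :
    pois ((Au0 m * (a • A0s m + b • A1s m)).trace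
        + (-t) • (Au1 m * ((a ^ 2) • A0s m + (b ^ 2) • A1s m)).trace)
      ((Au1 m * (a • A0s m + b • A1s m)).trace + (2 * t)⁻¹ • (Au0 m * Au0 m).trace) = 0 := by
  rw [pois_grad ((grad_A0B a b).add ((grad_A1B (a ^ 2) (b ^ 2)).smul (-t)))
    ((grad_A1B a b).add (grad_A0A0.smul (2 * t)⁻¹))]
  generalize hB : a • A0s m + b • A1s m = B
  generalize hK : (a ^ 2) • A0s m + (b ^ 2) • A1s m = K
  have e : (2 * t)⁻¹ * 2 = t⁻¹ := by field_simp
  have c1 : ∀ X Y Z : Mat, (X * (Y * Z)).trace = (Z * (X * Y)).trace := fun X Y Z => by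
    rw [← Matrix.mul_assoc, Matrix.trace_mul_comm]
  have h0 : Qm 4 m 2 * Pm 4 m 2 = Au0 m - Qm 4 m 3 * Pm 4 m 3 := by simp [Au0]
  have e0 : ∀ X Y : Mat, (X * Qm 4 m 0) * (Pm 4 m 0 * Y) = X * (A0s m * Y) := fun X Y => by
    simp [A0s, Matrix.mul_assoc]
  have e1 : ∀ X Y : Mat, (X * Qm 4 m 1) * (Pm 4 m 1 * Y) = X * (A1s m * Y) := fun X Y => by
    simp [A1s, Matrix.mul_assoc]
  have e2 : ∀ X Y : Mat, (X * Qm 4 m 2) * (Pm 4 m 2 * Y)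
      = X * (Au0 m * Y) - X * (Qm 4 m 3 * Pm 4 m 3 * Y) := fun X Y => by
    rw [← Matrix.mul_sub, ← Matrix.sub_mul, ← h0]; simp [Matrix.mul_assoc]
  have e3 : ∀ X Y : Mat, (X * Qm 4 m 2) * (Pm 4 m 3 * Y) = X * (Au1 m * Y) := fun X Y => by
    simp [Au1, Matrix.mul_assoc]
  have e4 : ∀ X Y : Mat, (X * Qm 4 m 3) * (Pm 4 m 3 * Y) = X * (Qm 4 m 3 * Pm 4 m 3 * Y) :=
    fun X Y => by simp [Matrix.mul_assoc]
  have hKt : ∀ X Y : Mat, (X * (K * Y)).trace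
      = (a ^ 2) • (X * (A0s m * Y)).trace + (b ^ 2) • (X * (A1s m * Y)).trace := fun X Y => by
    rw [← hK]; simp [Matrix.mul_add, Matrix.add_mul]
  have k1 := hKt (Au0 m) (Au1 m)
  have k2 := hKt (Au1 m) (Au0 m)
  have k3 := c1 (Au0 m) K (Au1 m)
  have k4 := c1 (Au1 m) K (Au0 m)
  have k5 := c1 K (Au1 m) (Au0 m)
  have k6 := c1 (Au0 m) (Au1 m) K
  have k5' := c1 (Au1 m) (Au0 m) K
  have k7 := c1 B (Au0 m) (Au0 m)
  have k8 := c1 (Au0 m) B (Au0 m)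
  have ht' : (C t⁻¹ : MvPolynomial (Idx 4 m) ℂ) * C t = 1 := by
    rw [← C_mul, inv_mul_cancel₀ ht, C_1]
  simp only [smul_eq_C_mul, C_pow] at k1 k2
  simp [Fin.sum_univ_four, smul_smul, e, e0, e1, e2, e3, e4, Matrix.mul_add, Matrix.add_mul]
  simp only [smul_eq_C_mul, C_mul, C_pow]
  linear_combination -k1 + k2 + C t⁻¹ * (k7 + k8) - k4 - k5
    + ht' * ((Au0 m * (Au1 m * K)).trace - (K * (Au1 m * Au0 m)).trace)

end helpers

/-- (i) `{H_u, H_1} = 0` for every `u ∉ {0,1}` and `t₁ ≠ 0`; (ii) holding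
the matrix indeterminates fixed (i.e. coefficientwise), `∂H_u/∂t₁ = ∂H_1/∂u`.  Hence
`H_u du + H_1 dt₁` is closed along the flows and the isomonodromic τ-function of the
system with simple poles at `0, 1` and a second-order pole at `u` is well defined. -/
theorem statement16 (m : ℕ) (hm : 1 ≤ m) :
    (∀ u t₁ : ℂ, u ≠ 0 → u ≠ 1 → t₁ ≠ 0 → pois (Hu m u t₁) (H1 m u t₁) = 0) ∧
    (∀ u t₁ : ℂ, u ≠ 0 → u ≠ 1 → t₁ ≠ 0 →
      ∀ d : Idx 4 m →₀ ℕ,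
        deriv (fun s : ℂ => coeff d (Hu m u s)) t₁
          = deriv (fun s : ℂ => coeff d (H1 m s t₁)) u) := by
  refine ⟨fun u t h0 h1 ht => ?_, fun u t h0 h1 ht d => ?_⟩
  · have := key_s16 (m := m) u⁻¹ (u - 1)⁻¹ t ht
    rw [Hu, H1, sub_eq_add_neg, ← neg_smul, ← inv_pow, ← inv_pow]
    exact this
  · have h1' : u - 1 ≠ 0 := sub_ne_zero.mpr h1
    simp only [Hu, H1, Matrix.mul_add, Matrix.mul_smul, Matrix.trace_add, Matrix.trace_smul,
      coeff_add, coeff_sub, coeff_smul, smul_eq_mul]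
    generalize coeff d (Au1 m * A0s m).trace = x
    generalize coeff d (Au1 m * A1s m).trace = y
    generalize coeff d (Au0 m * A0s m).trace = z
    generalize coeff d (Au0 m * A1s m).trace = w
    generalize coeff d (Au0 m * Au0 m).trace = v
    have l := ((hasDerivAt_id t).mul_const ((u ^ 2)⁻¹ * x + ((u - 1) ^ 2)⁻¹ * y)).const_sub
      (u⁻¹ * z + (u - 1)⁻¹ * w)
    have r := ((((hasDerivAt_id u).inv h0).mul_const x).add
      ((((hasDerivAt_id u).sub_const 1).inv h1').mul_const y)).add_const ((2 * t)⁻¹ * v)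
    refine l.deriv.trans (Eq.trans ?_ r.deriv.symm)
    simp only [id]
    field_simp
    ring
end
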